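/- arXiv:math/0612306 — 6 statements merged into one kernel-verified Lean document; each statement's English description precedes it below -/
import Mathlib

section
/- For every starting point x_0 ≥ 0 and every x ∈ C(x_0), the measure ν satisfies the invariance equation Σ_{w ∈ C(x_0)} ν({w}) p(w,x) = ν({x}); that is, the restriction of ν to the essential class C(x_0) is an invariant measure for the reflected random walk on C(x_0). -/
open MeasureTheory ProbabilityTheory Filter
open scoped ENNReal

/-- The essential class `C(x₀) = {kd ± x₀ : k ∈ ℤ} ∩ [0, N]`, where `N = sup supp μ`
(the condition `x ≤ N` being expressed as: `x` is below every upper bound of the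
support of `μ`, which is vacuous when `N = ∞`). -/
def essClass (μ : MeasureTheory.Measure ℝ) (d : ℕ) (x₀ : ℝ) : Set ℝ :=
  {x : ℝ | 0 ≤ x ∧ (∃ k : ℤ, x = k * d + x₀ ∨ x = k * d - x₀) ∧
    ∀ u : ℝ, (∀ n : ℕ, μ {(n : ℝ)} ≠ 0 → (n : ℝ) ≤ u) → x ≤ u}

/-- The one-step transition probabilities of the reflected random walk:
`p(w,0) = μ({w})`, `p(w,y) = μ({w+y})` if `w < y`, and
`p(w,y) = μ({w-y}) + μ({w+y})` if `w ≥ y > 0`. -/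
noncomputable def reflTransKernel (μ : MeasureTheory.Measure ℝ) (w y : ℝ) : ℝ≥0∞ :=
  if y = 0 then μ {w} else if w < y then μ {w + y} else μ {w - y} + μ {w + y}

/-- The invariant measure `ν`: `ν({0}) = (1 - μ({0}))/2` and
`ν({x}) = μ({x})/2 + μ((x,∞))` for `x > 0`. -/
noncomputable def nuFun (μ : MeasureTheory.Measure ℝ) (x : ℝ) : ℝ≥0∞ :=
  if x = 0 then (1 - μ {(0 : ℝ)}) / 2 else μ {x} / 2 + μ (Set.Ioi x)

/-!
Let `Y`, `Y'` be independent of law `μ`, and let `T(t) = (P(Y' ≥ t) + P(Y' > t)) / 2`, so that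
`ν = T - δ₀ / 2` on `[0, ∞)`. Weighting the jumps of the walk by `T` gives, for `x > 0`,

  `∑_{w ≥ 0} T(w) p(w, x) = E[T(Y + x)] + E[T(Y - x); Y ≥ x]`.

By Fubini the first term is the probability of `Y' > Y + x` and the second, after exchanging `Y` and
`Y'`, that of `x ≤ Y' ≤ Y + x`, ties being split evenly in both. Together they make up `μ [x, ∞)`,
and removing the atom of weight `1/2` at `0` takes off `p(0, x) / 2 = μ {x} / 2`. At `x = 0` each of
the two terms is `∑_{w ≥ 0} T(w) p(w, 0)`, which is therefore `1/2`.
-/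

section General

variable {α β : Type*} [MeasurableSpace α] [MeasurableSpace β]

lemma mem_of_measure_singleton_ne_zero {μ : Measure α} {s : Set α} (hμs : ∀ᵐ a ∂μ, a ∈ s) {a : α}
    (ha : μ {a} ≠ 0) : a ∈ s := by
  contrapose! ha
  exact measure_mono_null (Set.singleton_subset_iff.2 ha) hμs

lemma lintegral_eq_tsum_of_ae_mem_countable [MeasurableSingletonClass α] {μ : Measure α}
    {s : Set α} (hs : s.Countable) (hμs : ∀ᵐ a ∂μ, a ∈ s) (f : α → ℝ≥0∞) :
    ∫⁻ a, f a ∂μ = ∑' a, f a * μ {a} := by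
  have hsupp : Function.support (fun a => f a * μ {a}) ⊆ s :=
    fun _ ha => mem_of_measure_singleton_ne_zero hμs (right_ne_zero_of_mul ha)
  calc ∫⁻ a, f a ∂μ = ∫⁻ a in s, f a ∂μ := by rw [Measure.restrict_eq_self_of_ae_mem hμs]
    _ = ∑' a : s, f a * μ {(a : α)} := lintegral_countable f hs
    _ = ∑' a, f a * μ {a} := tsum_subtype_eq_of_support_subset hsupp

lemma ae_measure_singleton_ne_zero {μ : Measure α} {s : Set α} (hs : s.Countable)
    (hμs : ∀ᵐ a ∂μ, a ∈ s) : ∀ᵐ a ∂μ, μ {a} ≠ 0 := by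
  have hnull : μ (⋃ a ∈ {a ∈ s | μ {a} = 0}, {a}) = 0 :=
    (measure_biUnion_null_iff (hs.mono (Set.sep_subset _ _))).2 fun _ ha => ha.2
  filter_upwards [hμs, measure_eq_zero_iff_ae_notMem.1 hnull] with a has ha hzero
  exact ha (by simpa using ⟨has, hzero⟩)

lemma lintegral_section_add_setLIntegral_compl_section {μ : Measure α} [IsProbabilityMeasure μ]
    {ν : Measure β} [SFinite ν] {D : Set (α × β)} (hD : MeasurableSet D) {A : Set β}
    (hDA : ∀ᵐ a ∂μ, ∀ b, (a, b) ∈ D → b ∈ A) :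
    ∫⁻ a, ν {b | (a, b) ∈ D} ∂μ + ∫⁻ b in A, μ {a | (a, b) ∉ D} ∂ν = ν A := by
  have hvanish : Function.support (fun b => μ {a | (a, b) ∈ D}) ⊆ A := by
    intro b hb
    by_contra hbA
    refine hb (measure_eq_zero_iff_ae_notMem.2 ?_)
    filter_upwards [hDA] with a ha hab using hbA (ha b hab)
  have hsection (b : β) : MeasurableSet {a | (a, b) ∈ D} := measurable_prodMk_right hD
  calc
    _ = ∫⁻ b in A, μ {a | (a, b) ∈ D} ∂ν + ∫⁻ b in A, μ {a | (a, b) ∉ D} ∂ν := by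
      congr 1
      rw [setLIntegral_eq_of_support_subset hvanish]
      exact (Measure.prod_apply hD).symm.trans (Measure.prod_apply_symm hD)
    _ = ∫⁻ b in A, (μ {a | (a, b) ∈ D} + μ {a | (a, b) ∈ D}ᶜ) ∂ν :=
      (lintegral_add_left (measurable_measure_prodMk_right hD) _).symm
    _ = ν A := by simp only [prob_add_prob_compl (hsection _), setLIntegral_one]

end General

/-- The orbit of `x₀` under the group generated by the reflection `x ↦ -x` and the translation by
`d`; it is the class `C(x₀)` before intersection with `[0, N]`. -/
def dihedralOrbit (d : ℕ) (x₀ : ℝ) : Set ℝ :=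
  {x | ∃ k : ℤ, x = k * d + x₀ ∨ x = k * d - x₀}

section Orbit

variable {d : ℕ} {x₀ x : ℝ}

lemma neg_mem_dihedralOrbit (hx : x ∈ dihedralOrbit d x₀) : -x ∈ dihedralOrbit d x₀ := by
  obtain ⟨k, rfl | rfl⟩ := hx
  · exact ⟨-k, .inr (by push_cast; ring)⟩
  · exact ⟨-k, .inl (by push_cast; ring)⟩

lemma add_mem_dihedralOrbit (hx : x ∈ dihedralOrbit d x₀) {n : ℕ} (hn : d ∣ n) :
    n + x ∈ dihedralOrbit d x₀ := by
  obtain ⟨m, rfl⟩ := hn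
  obtain ⟨k, rfl | rfl⟩ := hx
  · exact ⟨m + k, .inl (by push_cast; ring)⟩
  · exact ⟨m + k, .inr (by push_cast; ring)⟩

end Orbit

section SymmTail

/-- The symmetrised tail `t ↦ (μ [t, ∞) + μ (t, ∞)) / 2`, in which an atom at `t` counts for half
its mass. Away from the origin it is `nuFun μ`. -/
noncomputable def symmTail (μ : Measure ℝ) (t : ℝ) : ℝ≥0∞ :=
  (μ (Set.Ici t) + μ (Set.Ioi t)) / 2

lemma measure_Ici_eq_singleton_add_Ioi (μ : Measure ℝ) (t : ℝ) :
    μ (Set.Ici t) = μ {t} + μ (Set.Ioi t) := by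
  rw [← Set.Ioi_insert, Set.insert_eq, measure_union (by simp) measurableSet_Ioi]

lemma symmTail_eq_half_singleton_add_Ioi (μ : Measure ℝ) (t : ℝ) :
    symmTail μ t = μ {t} / 2 + μ (Set.Ioi t) := by
  rw [symmTail, measure_Ici_eq_singleton_add_Ioi, add_assoc, ENNReal.add_div, ENNReal.add_div,
    ENNReal.add_halves]

lemma lintegral_symmTail_comp (μ ρ : Measure ℝ) {g : ℝ → ℝ} (hg : Measurable g) :
    ∫⁻ y, symmTail μ (g y) ∂ρ =
      (∫⁻ y, μ (Set.Ici (g y)) ∂ρ + ∫⁻ y, μ (Set.Ioi (g y)) ∂ρ) / 2 := by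
  have hIci : Measurable fun y => μ (Set.Ici (g y)) := by
    have hanti : Antitone fun t : ℝ => μ (Set.Ici t) :=
      fun _ _ h => measure_mono (Set.Ici_subset_Ici.2 h)
    exact hanti.measurable.comp hg
  simp only [symmTail, div_eq_mul_inv]
  rw [lintegral_mul_const' _ _ (by simp), lintegral_add_left hIci]

variable {μ ν : Measure ℝ}

lemma measure_Ici_zero_eq_one [IsProbabilityMeasure μ] (hnn : ∀ᵐ y ∂μ, 0 ≤ y) :
    μ (Set.Ici 0) = 1 :=
  (prob_compl_eq_zero_iff measurableSet_Ici).1 hnn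

lemma lintegral_Ioi_add_setLIntegral_Ici [IsProbabilityMeasure μ] [SFinite ν]
    (hnn : ∀ᵐ y ∂μ, 0 ≤ y) (x : ℝ) :
    ∫⁻ y, ν (Set.Ioi (y + x)) ∂μ + ∫⁻ y in Set.Ici x, μ (Set.Ici (y - x)) ∂ν = ν (Set.Ici x) := by
  have hsplit := lintegral_section_add_setLIntegral_compl_section (μ := μ) (ν := ν)
    (D := {p | p.1 + x < p.2}) (measurableSet_lt (by fun_prop) (by fun_prop))
    (A := Set.Ici x) (by
      filter_upwards [hnn] with y hy z hz
      exact (le_add_of_nonneg_left hy).trans hz.le)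
  simpa only [Set.mem_ofPred_eq, not_lt, ← sub_le_iff_le_add, Set.Ioi_def, Set.Ici_def] using hsplit

lemma lintegral_Ici_add_setLIntegral_Ioi [IsProbabilityMeasure μ] [SFinite ν]
    (hnn : ∀ᵐ y ∂μ, 0 ≤ y) (x : ℝ) :
    ∫⁻ y, ν (Set.Ici (y + x)) ∂μ + ∫⁻ y in Set.Ici x, μ (Set.Ioi (y - x)) ∂ν = ν (Set.Ici x) := by
  have hsplit := lintegral_section_add_setLIntegral_compl_section (μ := μ) (ν := ν)
    (D := {p | p.1 + x ≤ p.2}) (measurableSet_le (by fun_prop) (by fun_prop))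
    (A := Set.Ici x) (by
      filter_upwards [hnn] with y hy z hz
      exact (le_add_of_nonneg_left hy).trans hz)
  simpa only [Set.mem_ofPred_eq, not_le, ← sub_lt_iff_lt_add, Set.Ioi_def, Set.Ici_def] using hsplit

lemma lintegral_symmTail_add_setLIntegral_symmTail [IsProbabilityMeasure μ] [SFinite ν]
    (hnn : ∀ᵐ y ∂μ, 0 ≤ y) (x : ℝ) :
    ∫⁻ y, symmTail ν (y + x) ∂μ + ∫⁻ y in Set.Ici x, symmTail μ (y - x) ∂ν = ν (Set.Ici x) := by
  rw [lintegral_symmTail_comp ν μ (by fun_prop), lintegral_symmTail_comp μ _ (by fun_prop),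
    ← ENNReal.add_div, add_comm (∫⁻ y in Set.Ici x, μ (Set.Ici (y - x)) ∂ν), add_add_add_comm,
    lintegral_Ici_add_setLIntegral_Ioi hnn, lintegral_Ioi_add_setLIntegral_Ici hnn,
    ENNReal.add_div, ENNReal.add_halves]

end SymmTail

section NuFun

lemma nuFun_zero_add_half_singleton (μ : Measure ℝ) [IsProbabilityMeasure μ] :
    nuFun μ 0 + μ {0} / 2 = 1 / 2 := by
  rw [nuFun, if_pos rfl, ← ENNReal.add_div, tsub_add_cancel_of_le prob_le_one]

lemma nuFun_eq_symmTail_of_ne_zero (μ : Measure ℝ) {w : ℝ} (hw : w ≠ 0) :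
    nuFun μ w = symmTail μ w := by
  rw [nuFun, if_neg hw, symmTail_eq_half_singleton_add_Ioi]

lemma nuFun_add_half_singleton_of_ne_zero (μ : Measure ℝ) {x : ℝ} (hx : x ≠ 0) :
    nuFun μ x + μ {x} / 2 = μ (Set.Ici x) := by
  rw [nuFun, if_neg hx, add_right_comm, ENNReal.add_halves, measure_Ici_eq_singleton_add_Ioi]

variable {μ : Measure ℝ} [IsProbabilityMeasure μ]

lemma nuFun_zero_add_half (hnn : ∀ᵐ y ∂μ, 0 ≤ y) : nuFun μ 0 + 1 / 2 = symmTail μ 0 := by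
  have htotal : μ {0} + μ (Set.Ioi 0) = 1 := by
    rw [← measure_Ici_eq_singleton_add_Ioi, measure_Ici_zero_eq_one hnn]
  have htail : 1 - μ {0} = μ (Set.Ioi 0) :=
    ENNReal.sub_eq_of_eq_add_rev (measure_ne_top _ _) htotal.symm
  rw [nuFun, if_pos rfl, htail, symmTail, measure_Ici_zero_eq_one hnn, ENNReal.add_div, add_comm]

lemma nuFun_add_ite_eq_symmTail (hnn : ∀ᵐ y ∂μ, 0 ≤ y) (w : ℝ) :
    nuFun μ w + (if w = 0 then 1 / 2 else 0) = symmTail μ w := by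
  split_ifs with hw
  · rw [hw, nuFun_zero_add_half hnn]
  · rw [add_zero, nuFun_eq_symmTail_of_ne_zero μ hw]

lemma nuFun_le_measure_Ici (hnn : ∀ᵐ y ∂μ, 0 ≤ y) (w : ℝ) : nuFun μ w ≤ μ (Set.Ici w) := by
  rcases eq_or_ne w 0 with rfl | hw
  · calc nuFun μ 0 ≤ 1 / 2 := le_self_add.trans_eq (nuFun_zero_add_half_singleton μ)
      _ ≤ 1 := ENNReal.half_le_self
      _ = μ (Set.Ici 0) := (measure_Ici_zero_eq_one hnn).symm
  · exact le_self_add.trans_eq (nuFun_add_half_singleton_of_ne_zero μ hw)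

end NuFun

section ReflTransKernel

lemma reflTransKernel_zero_left (μ : Measure ℝ) {x : ℝ} (hx : 0 ≤ x) :
    reflTransKernel μ 0 x = μ {x} := by
  rcases hx.eq_or_lt with rfl | hx
  · rw [reflTransKernel, if_pos rfl]
  · rw [reflTransKernel, if_neg hx.ne', if_pos hx, zero_add]

variable {μ : Measure ℝ}

lemma reflTransKernel_of_pos (hnn : ∀ᵐ y ∂μ, 0 ≤ y) {x : ℝ} (hx : 0 < x) (w : ℝ) :
    reflTransKernel μ w x = μ {w - x} + μ {w + x} := by
  rw [reflTransKernel, if_neg hx.ne', ite_eq_right_iff]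
  intro hw
  have hneg : μ {w - x} = 0 := by
    refine measure_eq_zero_iff_ae_notMem.2 (hnn.mono fun y hy hyw => ?_)
    rw [Set.mem_singleton_iff] at hyw
    linarith
  rw [hneg, zero_add]

lemma measure_singleton_ne_zero_of_reflTransKernel_ne_zero {w x : ℝ}
    (h : reflTransKernel μ w x ≠ 0) : μ {w - x} ≠ 0 ∨ μ {w + x} ≠ 0 := by
  contrapose! h
  obtain ⟨hsub, hadd⟩ := h
  rw [reflTransKernel]
  split_ifs with hx
  · simpa only [hx, sub_zero] using hsub
  · exact hadd
  · rw [hsub, hadd, add_zero]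

variable {s : Set ℝ}

lemma tsum_Ici_mul_measure_singleton_sub (hs : s.Countable) (hμs : ∀ᵐ y ∂μ, y ∈ s)
    (f : ℝ → ℝ≥0∞) (c x : ℝ) :
    ∑' w : Set.Ici c, f w * μ {(w : ℝ) - x} = ∫⁻ y in Set.Ici (c - x), f (y + x) ∂μ := by
  rw [tsum_subtype (Set.Ici c) fun w => f w * μ {w - x}, ← (Equiv.addRight x).tsum_eq,
    ← lintegral_indicator measurableSet_Ici, lintegral_eq_tsum_of_ae_mem_countable hs hμs]
  refine tsum_congr fun y => ?_
  simp only [Equiv.coe_addRight, Set.indicator_apply, Set.mem_Ici, sub_le_iff_le_add,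
    add_sub_cancel_right, ite_mul, zero_mul]

lemma tsum_Ici_mul_jumps (hs : s.Countable) (hμs : ∀ᵐ y ∂μ, y ∈ s) (hnn : ∀ᵐ y ∂μ, 0 ≤ y)
    (f : ℝ → ℝ≥0∞) {x : ℝ} (hx : 0 ≤ x) :
    ∑' w : Set.Ici (0 : ℝ), f w * (μ {(w : ℝ) - x} + μ {(w : ℝ) + x}) =
      ∫⁻ y, f (y + x) ∂μ + ∫⁻ y in Set.Ici x, f (y - x) ∂μ := by
  have hdown := tsum_Ici_mul_measure_singleton_sub hs hμs f 0 x
  have hup := tsum_Ici_mul_measure_singleton_sub hs hμs f 0 (-x)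
  have hrestrict : μ.restrict (Set.Ici (0 - x)) = μ :=
    Measure.restrict_eq_self_of_ae_mem (hnn.mono fun y hy => by
      rw [Set.mem_Ici]; linarith)
  simp only [sub_neg_eq_add, zero_add, ← sub_eq_add_neg] at hup
  simp only [mul_add]
  rw [ENNReal.tsum_add, hdown, hup, hrestrict]

variable [IsProbabilityMeasure μ]

lemma tsum_Ici_symmTail_mul_jumps (hs : s.Countable) (hμs : ∀ᵐ y ∂μ, y ∈ s)
    (hnn : ∀ᵐ y ∂μ, 0 ≤ y) {x : ℝ} (hx : 0 ≤ x) :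
    ∑' w : Set.Ici (0 : ℝ), symmTail μ w * (μ {(w : ℝ) - x} + μ {(w : ℝ) + x}) =
      μ (Set.Ici x) := by
  rw [tsum_Ici_mul_jumps hs hμs hnn _ hx, lintegral_symmTail_add_setLIntegral_symmTail hnn]

lemma tsum_Ici_symmTail_mul_reflTransKernel (hs : s.Countable) (hμs : ∀ᵐ y ∂μ, y ∈ s)
    (hnn : ∀ᵐ y ∂μ, 0 ≤ y) {x : ℝ} (hx : 0 ≤ x) :
    ∑' w : Set.Ici (0 : ℝ), symmTail μ w * reflTransKernel μ w x = nuFun μ x + μ {x} / 2 := by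
  have hjumps := tsum_Ici_symmTail_mul_jumps hs hμs hnn hx
  rcases hx.eq_or_lt with rfl | hx
  · simp only [sub_zero, add_zero, ← mul_two, ← mul_assoc] at hjumps
    rw [ENNReal.tsum_mul_right, measure_Ici_zero_eq_one hnn] at hjumps
    simp only [reflTransKernel, if_true]
    rw [nuFun_zero_add_half_singleton, ENNReal.eq_div_iff (by simp) (by simp), mul_comm, hjumps]
  · simp only [reflTransKernel_of_pos hnn hx]
    rw [hjumps, nuFun_add_half_singleton_of_ne_zero μ hx.ne']

theorem tsum_Ici_nuFun_mul_reflTransKernel (hs : s.Countable) (hμs : ∀ᵐ y ∂μ, y ∈ s)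
    (hnn : ∀ᵐ y ∂μ, 0 ≤ y) {x : ℝ} (hx : 0 ≤ x) :
    ∑' w : Set.Ici (0 : ℝ), nuFun μ w * reflTransKernel μ w x = nuFun μ x := by
  have horigin : ∑' w : Set.Ici (0 : ℝ),
      (if (w : ℝ) = 0 then 1 / 2 else 0) * reflTransKernel μ w x = μ {x} / 2 := by
    rw [tsum_eq_single ⟨0, Set.self_mem_Ici⟩
        fun w hw => by rw [if_neg (mt Subtype.ext hw), zero_mul],
      if_pos rfl, reflTransKernel_zero_left μ hx, one_div, ENNReal.div_eq_inv_mul]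
  have hfinite : μ {x} / 2 ≠ ∞ := ENNReal.div_ne_top (measure_ne_top _ _) two_ne_zero
  refine (ENNReal.add_left_inj hfinite).1 ?_
  calc
    _ = ∑' w : Set.Ici (0 : ℝ), (nuFun μ w + if (w : ℝ) = 0 then 1 / 2 else 0) *
          reflTransKernel μ w x := by
      simp only [add_mul]
      rw [ENNReal.tsum_add, horigin]
    _ = ∑' w : Set.Ici (0 : ℝ), symmTail μ w * reflTransKernel μ w x := by
      simp only [nuFun_add_ite_eq_symmTail hnn]
    _ = nuFun μ x + μ {x} / 2 := tsum_Ici_symmTail_mul_reflTransKernel hs hμs hnn hx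

end ReflTransKernel

section Lattice

variable {μ : Measure ℝ}

lemma exists_nat_eq_of_measure_singleton_ne_zero
    (hlat : μ (Set.range (fun n : ℕ => (n : ℝ)))ᶜ = 0) {w : ℝ} (hw : μ {w} ≠ 0) :
    ∃ n : ℕ, (n : ℝ) = w :=
  mem_of_measure_singleton_ne_zero hlat hw

lemma ae_nonneg_of_lattice (hlat : μ (Set.range (fun n : ℕ => (n : ℝ)))ᶜ = 0) :
    ∀ᵐ y ∂μ, 0 ≤ y :=
  measure_mono_null
    (Set.compl_subset_compl.2 (Set.range_subset_iff.2 fun n : ℕ => (n.cast_nonneg : (0 : ℝ) ≤ n)))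
    hlat

lemma le_of_nuFun_ne_zero [IsProbabilityMeasure μ]
    (hlat : μ (Set.range (fun n : ℕ => (n : ℝ)))ᶜ = 0) {w u : ℝ} (hw : nuFun μ w ≠ 0)
    (hu : ∀ n : ℕ, μ {(n : ℝ)} ≠ 0 → (n : ℝ) ≤ u) : w ≤ u := by
  contrapose! hw
  have htail : μ (Set.Ici w) = 0 := by
    refine measure_eq_zero_iff_ae_notMem.2 ?_
    filter_upwards [ae_measure_singleton_ne_zero (Set.countable_range _) hlat] with y hy hwy
    obtain ⟨n, rfl⟩ := exists_nat_eq_of_measure_singleton_ne_zero hlat hy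
    exact (hu n hy).not_gt (hw.trans_le hwy)
  exact le_bot_iff.1 ((nuFun_le_measure_Ici (ae_nonneg_of_lattice hlat) w).trans_eq htail)

lemma mem_dihedralOrbit_of_reflTransKernel_ne_zero
    (hlat : μ (Set.range (fun n : ℕ => (n : ℝ)))ᶜ = 0) {d : ℕ}
    (hd : ∀ n : ℕ, μ {(n : ℝ)} ≠ 0 → d ∣ n) {x₀ x w : ℝ} (hx : x ∈ dihedralOrbit d x₀)
    (hw : reflTransKernel μ w x ≠ 0) : w ∈ dihedralOrbit d x₀ := by
  rcases measure_singleton_ne_zero_of_reflTransKernel_ne_zero hw with hsub | hadd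
  · obtain ⟨n, hn⟩ := exists_nat_eq_of_measure_singleton_ne_zero hlat hsub
    have hmem := add_mem_dihedralOrbit hx (hd n (hn ▸ hsub))
    rwa [hn, sub_add_cancel] at hmem
  · obtain ⟨n, hn⟩ := exists_nat_eq_of_measure_singleton_ne_zero hlat hadd
    have hmem := add_mem_dihedralOrbit (neg_mem_dihedralOrbit hx) (hd n (hn ▸ hadd))
    rwa [hn, add_neg_cancel_right] at hmem

lemma mem_essClass_of_nuFun_mul_reflTransKernel_ne_zero [IsProbabilityMeasure μ]
    (hlat : μ (Set.range (fun n : ℕ => (n : ℝ)))ᶜ = 0) {d : ℕ}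
    (hd : ∀ n : ℕ, μ {(n : ℝ)} ≠ 0 → d ∣ n) {x₀ x w : ℝ} (hx : x ∈ essClass μ d x₀) (hw₀ : 0 ≤ w)
    (hw : nuFun μ w * reflTransKernel μ w x ≠ 0) : w ∈ essClass μ d x₀ :=
  ⟨hw₀, mem_dihedralOrbit_of_reflTransKernel_ne_zero hlat hd hx.2.1 (right_ne_zero_of_mul hw),
    fun _ hu => le_of_nuFun_ne_zero hlat (left_ne_zero_of_mul hw) hu⟩

/-- When `d` is a proper divisor of the gcd of the support, `essClass μ d x₀` is a union of
essential classes. -/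
theorem nu_invariant_on_essClass_general (μ : Measure ℝ) [IsProbabilityMeasure μ]
    (hlat : μ (Set.range (fun n : ℕ => (n : ℝ)))ᶜ = 0) (d : ℕ)
    (hd : ∀ n : ℕ, μ {(n : ℝ)} ≠ 0 → d ∣ n) (x₀ x : ℝ) (hx : x ∈ essClass μ d x₀) :
    ∑' w : essClass μ d x₀, nuFun μ w * reflTransKernel μ w x = nuFun μ x := by
  have hsub : essClass μ d x₀ ⊆ Set.Ici 0 := fun _ hw => hw.1
  have hzero : ∀ w ∈ Set.Ici 0 \ essClass μ d x₀, nuFun μ w * reflTransKernel μ w x = 0 :=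
    fun w hw => by_contra fun hne =>
      hw.2 (mem_essClass_of_nuFun_mul_reflTransKernel_ne_zero hlat hd hx hw.1 hne)
  rw [← tsum_Ici_nuFun_mul_reflTransKernel (Set.countable_range _) hlat
      (ae_nonneg_of_lattice hlat) hx.1,
    tsum_setElem_eq_tsum_setElem_sdiff (Set.Ici 0) _ hzero, Set.sdiff_sdiff_cancel_left hsub]

end Lattice

/-- In the lattice case, for every starting point `x₀ ≥ 0` and every
`x ∈ C(x₀)`, the measure `ν` satisfies `Σ_{w ∈ C(x₀)} ν({w}) p(w,x) = ν({x})`: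
the restriction of `ν` to the essential class `C(x₀)` is an invariant measure for the
reflected random walk on `C(x₀)`. -/
theorem nu_invariant_on_essClass
    (μ : Measure ℝ) [IsProbabilityMeasure μ]
    (hlat : μ (Set.range (fun n : ℕ => (n : ℝ)))ᶜ = 0)
    (hnondeg : μ ≠ Measure.dirac 0)
    (d : ℕ)
    (hd1 : ∀ n : ℕ, μ {(n : ℝ)} ≠ 0 → d ∣ n)
    (hd2 : ∀ e : ℕ, (∀ n : ℕ, μ {(n : ℝ)} ≠ 0 → e ∣ n) → e ∣ d)
    (x₀ : ℝ) (hx₀ : 0 ≤ x₀) (x : ℝ) (hx : x ∈ essClass μ d x₀) :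
    ∑' w : essClass μ d x₀, nuFun μ w * reflTransKernel μ w x = nuFun μ x :=
  nu_invariant_on_essClass_general μ hlat d hd1 x₀ x hx
end

section
/- For every starting point x_0 ≥ 0, the total mass Σ_{x ∈ C(x_0)} ρ({x}) is finite if and only if Σ_{k=0}^∞ (1 − F_μ(k))² < ∞. In particular, finiteness of this total mass does not depend on the starting point x_0. -/
open MeasureTheory ProbabilityTheory Filter
open scoped ENNReal

/-- The measure `ρ`: `ρ({0}) = (1 - μ({0}))/2` and
`ρ({x}) = Σ_{k=1}^∞ (μ({x})/2 + μ((x, x+k)) + μ({x+k})/2) μ({k})` for `x > 0`. -/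
noncomputable def rhoFun (μ : MeasureTheory.Measure ℝ) (x : ℝ) : ℝ≥0∞ :=
  if x = 0 then (1 - μ {(0 : ℝ)}) / 2
  else ∑' k : ℕ,
    (μ {x} / 2 + μ (Set.Ioo x (x + ((k : ℝ) + 1))) + μ {x + ((k : ℝ) + 1)} / 2) *
      μ {((k : ℝ) + 1)}

/-!
For `x > 0`, a pair of independent `μ`-distributed jumps `(v, u)` with `v > 0` contributes to
`ρ({x})` exactly when `x` lies in the window `[u - v, u]`, endpoints counting one half. Hence
`Σ_{x ∈ C(x₀)} ρ({x})` is, up to a factor `2`, the expected number of points of `C(x₀)` in the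
window. Within `[0, ∞)` the window has length `min v u`, and almost surely it stays below `N`; since
`C(x₀)` consists there of at most two progressions of step `d`, that number is comparable with
`min v u`, up to additive constants. Finally `Σ_k μ((k, ∞))²` is the expected value of `⌈min v u⌉`,
by counting the `k` below both jumps.
-/

section DoubleCounting

variable {α ι : Type*} [MeasurableSpace α]

lemma tsum_measure_eq_lintegral_encard [Countable ι] (ν : Measure α) {A : ι → Set α}
    (hA : ∀ i, MeasurableSet (A i)) :
    ∑' i, ν (A i) = ∫⁻ p, ({i | p ∈ A i}.encard : ℝ≥0∞) ∂ν := by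
  have hcount (p : α) :
      ({i | p ∈ A i}.encard : ℝ≥0∞) = ∑' i, (A i).indicator (1 : α → ℝ≥0∞) p := by
    rw [← ENNReal.tsum_set_one, tsum_subtype _ fun _ => (1 : ℝ≥0∞)]
    rfl
  simp_rw [hcount, ← lintegral_indicator_one (hA _)]
  exact (lintegral_tsum fun i => (measurable_one.indicator (hA i)).aemeasurable).symm

lemma tsum_sq_measure_Ioi_eq_lintegral_ceil_min (μ : Measure ℝ) [SFinite μ] :
    ∑' k : ℕ, μ (Set.Ioi (k : ℝ)) ^ 2 =
      ∫⁻ p : ℝ × ℝ, (⌈min p.1 p.2⌉₊ : ℝ≥0∞) ∂μ.prod μ := by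
  have hcount (p : ℝ × ℝ) :
      {k : ℕ | p ∈ Set.Ioi (k : ℝ) ×ˢ Set.Ioi (k : ℝ)} = Finset.range ⌈min p.1 p.2⌉₊ := by
    ext k
    simp [Nat.lt_ceil]
  simp_rw [sq, ← Measure.prod_prod]
  rw [tsum_measure_eq_lintegral_encard _ fun k => measurableSet_Ioi.prod measurableSet_Ioi]
  simp_rw [hcount, Set.encard_coe_eq_coe_finsetCard, Finset.card_range, ENat.toENNReal_coe]

end DoubleCounting

section Progression

variable {d : ℝ}

lemma preimage_mul_add_Icc (hd : 0 < d) (a b c : ℝ) :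
    (fun m : ℤ => m * d + c) ⁻¹' Set.Icc a b = Set.Icc ⌈(a - c) / d⌉ ⌊(b - c) / d⌋ := by
  ext m
  simp [Int.ceil_le, Int.le_floor, div_le_iff₀ hd, le_div_iff₀ hd, le_sub_iff_add_le]

lemma encard_range_mul_add_inter_Icc (hd : 0 < d) (a b c : ℝ) :
    (Set.range (fun m : ℤ => m * d + c) ∩ Set.Icc a b).encard =
      (⌊(b - c) / d⌋ + 1 - ⌈(a - c) / d⌉).toNat := by
  have hinj : Function.Injective fun m : ℤ => (m : ℝ) * d + c :=
    (add_left_injective c).comp ((mul_left_injective₀ hd.ne').comp Int.cast_injective)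
  rw [Set.inter_comm, ← Set.image_preimage_eq_inter_range, hinj.encard_image,
    preimage_mul_add_Icc hd, ← Finset.coe_Icc, Set.encard_coe_eq_coe_finsetCard, Int.card_Icc]

lemma encard_range_mul_add_inter_Icc_le (hd : 0 < d) (a b c : ℝ) :
    (Set.range (fun m : ℤ => m * d + c) ∩ Set.Icc a b).encard ≤ (⌊(b - a) / d⌋₊ + 1 : ℕ) := by
  have hfloor : ⌊(b - c) / d⌋ - ⌈(a - c) / d⌉ ≤ ⌊(b - a) / d⌋ := by
    rw [Int.le_floor, show (b - a) / d = (b - c) / d - (a - c) / d by ring]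
    push_cast
    exact sub_le_sub (Int.floor_le _) (Int.le_ceil _)
  rw [encard_range_mul_add_inter_Icc hd, Nat.cast_le, ← Int.floor_toNat]
  omega

lemma floor_le_encard_range_mul_add_inter_Icc (hd : 0 < d) (a b c : ℝ) :
    (⌊(b - a) / d⌋₊ : ℕ∞) ≤ (Set.range (fun m : ℤ => m * d + c) ∩ Set.Icc a b).encard := by
  have hfloor : ⌊(b - a) / d⌋ + ⌈(a - c) / d⌉ ≤ ⌊(b - c) / d⌋ + 1 := by
    have hceil : ⌈(a - c) / d⌉ ≤ ⌊(a - c) / d⌋ + 1 := Int.ceil_le_floor_add_one _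
    have hadd := Int.le_floor_add ((b - a) / d) ((a - c) / d)
    rw [show (b - a) / d + (a - c) / d = (b - c) / d by ring] at hadd
    omega
  rw [encard_range_mul_add_inter_Icc hd, Nat.cast_le, ← Int.floor_toNat]
  omega

end Progression

section EssentialClass

variable {μ : Measure ℝ} {d : ℕ} {x₀ : ℝ}

lemma essClass_subset_Ici : essClass μ d x₀ ⊆ Set.Ici 0 := fun _ hx => hx.1

lemma essClass_subset_union :
    essClass μ d x₀ ⊆ Set.range (fun m : ℤ => (m : ℝ) * d + x₀) ∪
      Set.range (fun m : ℤ => (m : ℝ) * d + -x₀) := by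
  rintro x ⟨-, ⟨m, hm | hm⟩, -⟩
  · exact Or.inl ⟨m, hm.symm⟩
  · exact Or.inr ⟨m, hm.symm⟩

lemma countable_essClass : (essClass μ d x₀).Countable :=
  ((Set.countable_range _).union (Set.countable_range _)).mono essClass_subset_union

lemma encard_essClass_inter_Icc_le (hd : d ≠ 0) (a b : ℝ) :
    (essClass μ d x₀ ∩ Set.Icc a b).encard ≤ (2 * (⌊(b - a) / d⌋₊ + 1) : ℕ) := by
  have hd' : (0 : ℝ) < d := by positivity
  have hsub := Set.inter_subset_inter_left (Set.Icc a b)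
    (essClass_subset_union (μ := μ) (d := d) (x₀ := x₀))
  rw [Set.union_inter_distrib_right] at hsub
  rw [two_mul, Nat.cast_add]
  exact (Set.encard_le_encard hsub).trans <| (Set.encard_union_le _ _).trans <|
    add_le_add (encard_range_mul_add_inter_Icc_le hd' a b x₀)
      (encard_range_mul_add_inter_Icc_le hd' a b (-x₀))

lemma floor_le_encard_essClass_inter_Icc (hd : d ≠ 0) {a b : ℝ} (ha : 0 ≤ a)
    (hb : ∀ B : ℝ, (∀ n : ℕ, μ {(n : ℝ)} ≠ 0 → (n : ℝ) ≤ B) → b ≤ B) :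
    (⌊(b - a) / d⌋₊ : ℕ∞) ≤ (essClass μ d x₀ ∩ Set.Icc a b).encard := by
  refine (floor_le_encard_range_mul_add_inter_Icc (by positivity) a b x₀).trans
    (Set.encard_le_encard ?_)
  rintro _ ⟨⟨m, rfl⟩, hm⟩
  exact ⟨⟨ha.trans hm.1, ⟨m, Or.inl rfl⟩, fun B hB => hm.2.trans (hb B hB)⟩, hm⟩

end EssentialClass

lemma sub_max_zero_sub {G : Type*} [AddCommGroup G] [LinearOrder G] [IsOrderedAddMonoid G]
    (u v : G) : u - max 0 (u - v) = min v u := by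
  rw [← min_sub_sub_left, sub_zero, sub_sub_cancel, min_comm]

section Window

/-- The pairs `(v, u)` with `v > 0` whose window `[u - v, u]` contains `x`. For `x ≠ 0`, their
mass under `μ.prod μ` is `ρ({x})` with the factors `1 / 2` at the endpoints removed. -/
def windowPairs (x : ℝ) : Set (ℝ × ℝ) :=
  {p : ℝ × ℝ | 0 < p.1 ∧ x ∈ Set.Icc (p.2 - p.1) p.2}

lemma measurableSet_windowPairs (x : ℝ) : MeasurableSet (windowPairs x) :=
  (measurableSet_lt measurable_const measurable_fst).inter <|
    (measurableSet_le (measurable_snd.sub measurable_fst) measurable_const).inter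
      (measurableSet_le measurable_const measurable_snd)

lemma measure_windowPairs (μ : Measure ℝ) [SFinite μ] (x : ℝ) :
    (μ.prod μ) (windowPairs x) = ∫⁻ v in Set.Ioi 0, μ (Set.Icc x (x + v)) ∂μ := by
  rw [Measure.prod_apply (measurableSet_windowPairs x), ← lintegral_indicator measurableSet_Ioi]
  refine lintegral_congr fun v => ?_
  have hsection : Prod.mk v ⁻¹' windowPairs x = if 0 < v then Set.Icc x (x + v) else ∅ := by
    ext u
    split_ifs with hv <;> simp [windowPairs, hv, and_comm]
  by_cases hv : 0 < v <;> simp [hsection, hv]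

variable {S : Set ℝ}

lemma tsum_measure_windowPairs_eq_lintegral_encard (ν : Measure (ℝ × ℝ)) (hS : S.Countable) :
    ∑' x : S, ν (windowPairs x) = ∫⁻ p, ({x : S | p ∈ windowPairs x}.encard : ℝ≥0∞) ∂ν :=
  have := hS.to_subtype
  tsum_measure_eq_lintegral_encard ν fun x : S => measurableSet_windowPairs x

variable (p : ℝ × ℝ)

lemma encard_setOf_mem_windowPairs (hS : S ⊆ Set.Ici 0) (hp : 0 < p.1) :
    {x : S | p ∈ windowPairs x}.encard = (S ∩ Set.Icc (max 0 (p.2 - p.1)) p.2).encard := by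
  rw [← Subtype.val_injective.encard_image]
  congr 1
  ext x
  simp only [windowPairs, Set.mem_image, Set.mem_ofPred_eq, Subtype.exists, Set.mem_inter_iff,
    Set.mem_Icc, max_le_iff]
  grind

lemma setOf_mem_windowPairs_eq_empty (hp : p.1 ≤ 0) : {x : S | p ∈ windowPairs x} = ∅ := by
  simp [windowPairs, hp.not_gt]

variable {μ : Measure ℝ} {d : ℕ} {x₀ : ℝ}

lemma encard_essClass_windowPairs_le (hd : d ≠ 0) :
    {x : essClass μ d x₀ | p ∈ windowPairs x}.encard ≤ (2 * (⌈min p.1 p.2⌉₊ + 1) : ℕ) := by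
  rcases lt_or_ge 0 p.1 with hp | hp
  · rw [encard_setOf_mem_windowPairs p essClass_subset_Ici hp]
    refine (encard_essClass_inter_Icc_le hd _ _).trans (Nat.cast_le.2 ?_)
    rw [sub_max_zero_sub]
    gcongr
    rw [Nat.floor_div_natCast]
    exact (Nat.div_le_self _ _).trans (Nat.floor_le_ceil _)
  · simp [setOf_mem_windowPairs_eq_empty p hp]

lemma ceil_min_le_mul_encard_essClass_windowPairs (hd : d ≠ 0)
    (hp : ∀ B : ℝ, (∀ n : ℕ, μ {(n : ℝ)} ≠ 0 → (n : ℝ) ≤ B) → p.2 ≤ B) :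
    (⌈min p.1 p.2⌉₊ : ℕ∞) ≤ d * ({x : essClass μ d x₀ | p ∈ windowPairs x}.encard + 1) := by
  rcases lt_or_ge 0 p.1 with hp₁ | hp₁
  · rw [encard_setOf_mem_windowPairs p essClass_subset_Ici hp₁]
    have hfloor := floor_le_encard_essClass_inter_Icc (x₀ := x₀) hd
      (le_max_left 0 (p.2 - p.1)) hp
    rw [sub_max_zero_sub] at hfloor
    have hceil : ⌈min p.1 p.2⌉₊ ≤ d * (⌊min p.1 p.2 / d⌋₊ + 1) := by
      rw [Nat.ceil_le]
      push_cast
      exact ((div_lt_iff₀' (by positivity)).1 (Nat.lt_floor_add_one _)).le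
    calc (⌈min p.1 p.2⌉₊ : ℕ∞) ≤ d * (⌊min p.1 p.2 / d⌋₊ + 1) := by exact_mod_cast hceil
      _ ≤ _ := by gcongr
  · simp [Nat.ceil_eq_zero.2 ((min_le_left _ _).trans hp₁)]

end Window

section Atomic

lemma ae_mem_and_measure_singleton_ne_zero {α : Type*} [MeasurableSpace α] {μ : Measure α}
    {s : Set α} (hs : s.Countable) (hμ : μ sᶜ = 0) : ∀ᵐ x ∂μ, x ∈ s ∧ μ {x} ≠ 0 := by
  have hnull : μ {x ∈ s | μ {x} = 0} = 0 := by
    rw [← Set.biUnion_of_singleton {x ∈ s | μ {x} = 0},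
      measure_biUnion_null_iff (hs.mono (Set.sep_subset _ _))]
    exact fun x hx => hx.2
  filter_upwards [mem_ae_iff.2 hμ, measure_eq_zero_iff_ae_notMem.1 hnull] with x hx hx₀
  exact ⟨hx, fun h => hx₀ ⟨hx, h⟩⟩

lemma eq_dirac_of_ae_eq {α : Type*} [MeasurableSpace α] {μ : Measure α} [IsProbabilityMeasure μ]
    {a : α} (h : ∀ᵐ x ∂μ, x = a) : μ = Measure.dirac a := by
  have hmap : μ.map id = μ.map fun _ => a := Measure.map_congr h
  simpa using hmap

variable {μ : Measure ℝ}

lemma rhoFun_zero : rhoFun μ 0 = (1 - μ {0}) / 2 := if_pos rfl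

variable (hlat : μ (Set.range (fun n : ℕ => (n : ℝ)))ᶜ = 0)

include hlat

lemma ae_nonneg_of_measure_compl_range_natCast : ∀ᵐ u ∂μ, 0 ≤ u := by
  filter_upwards [mem_ae_iff.2 hlat]
  rintro _ ⟨n, rfl⟩
  exact Nat.cast_nonneg n

lemma ae_exists_natCast_eq_and_measure_singleton_ne_zero :
    ∀ᵐ u ∂μ, ∃ n : ℕ, (n : ℝ) = u ∧ μ {(n : ℝ)} ≠ 0 := by
  filter_upwards [ae_mem_and_measure_singleton_ne_zero (Set.countable_range _) hlat]
  rintro _ ⟨⟨n, rfl⟩, hn⟩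
  exact ⟨n, rfl, hn⟩

lemma setLIntegral_Ioi_zero_eq_tsum (f : ℝ → ℝ≥0∞) :
    ∫⁻ v in Set.Ioi 0, f v ∂μ = ∑' k : ℕ, f (k + 1) * μ {(k : ℝ) + 1} := by
  have hpos : Set.Ioi 0 =ᵐ[μ] Set.range fun k : ℕ => (k : ℝ) + 1 := by
    filter_upwards [mem_ae_iff.2 hlat]
    rintro _ ⟨n, rfl⟩
    refine propext ⟨fun hn => ?_, ?_⟩
    · obtain ⟨k, rfl⟩ := Nat.exists_eq_succ_of_ne_zero (Nat.cast_pos.1 hn).ne'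
      exact ⟨k, (Nat.cast_succ k).symm⟩
    · rintro ⟨k, hk⟩
      exact hk ▸ Nat.cast_add_one_pos k
  have hinj : Function.Injective fun k : ℕ => (k : ℝ) + 1 :=
    (add_left_injective 1).comp Nat.cast_injective
  rw [setLIntegral_congr hpos, lintegral_countable f (Set.countable_range _),
    tsum_range (fun v => f v * μ {v}) hinj]

lemma rhoFun_of_ne_zero {x : ℝ} (hx : x ≠ 0) :
    rhoFun μ x = ∫⁻ v in Set.Ioi 0, μ {x} / 2 + μ (Set.Ioo x (x + v)) + μ {x + v} / 2 ∂μ := by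
  rw [rhoFun, if_neg hx, setLIntegral_Ioi_zero_eq_tsum hlat]

end Atomic

section Comparison

lemma measure_Icc_eq_add_measure_Ioo_add (μ : Measure ℝ) {a b : ℝ} (hab : a < b) :
    μ (Set.Icc a b) = μ {a} + μ (Set.Ioo a b) + μ {b} := by
  rw [← Set.Ico_insert_right hab.le, ← Set.union_singleton, ← Set.Ioo_insert_left hab,
    ← Set.singleton_union, measure_union (by simp [hab.ne']) (measurableSet_singleton _),
    measure_union (by simp) measurableSet_Ioo]

variable {μ : Measure ℝ} [IsProbabilityMeasure μ]

lemma one_sub_measure_singleton_zero (hnonneg : ∀ᵐ u ∂μ, 0 ≤ u) : 1 - μ {0} = μ (Set.Ioi 0) := by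
  rw [← prob_compl_eq_one_sub (measurableSet_singleton 0)]
  refine measure_congr ?_
  filter_upwards [hnonneg] with u hu
  exact propext hu.lt_iff_ne'.symm

-- If `v > 0` and `u ≥ 0`, then `0` is in the window of `(v, u)` or in that of `(u, v)`.
lemma measure_Ioi_zero_le_two_mul_measure_windowPairs_zero (hnonneg : ∀ᵐ u ∂μ, 0 ≤ u) :
    μ (Set.Ioi 0) ≤ 2 * (μ.prod μ) (windowPairs 0) := by
  have hcover : ∀ᵐ p ∂μ.prod μ, p ∈ Set.Ioi (0 : ℝ) ×ˢ Set.univ →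
      p ∈ windowPairs 0 ∪ Prod.swap ⁻¹' windowPairs 0 := by
    filter_upwards [Measure.quasiMeasurePreserving_snd.ae hnonneg] with p hp₂ ⟨hp₁, _⟩
    rw [Set.mem_Ioi] at hp₁
    rcases le_or_gt p.2 p.1 with hle | hlt
    · exact Or.inl ⟨hp₁, sub_nonpos.2 hle, hp₂⟩
    · exact Or.inr ⟨hp₁.trans hlt, sub_nonpos.2 hlt.le, hp₁.le⟩
  calc μ (Set.Ioi 0) = (μ.prod μ) (Set.Ioi 0 ×ˢ Set.univ) := by simp
    _ ≤ (μ.prod μ) (windowPairs 0 ∪ Prod.swap ⁻¹' windowPairs 0) := measure_mono_ae hcover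
    _ ≤ (μ.prod μ) (windowPairs 0) + (μ.prod μ) (Prod.swap ⁻¹' windowPairs 0) :=
        measure_union_le _ _
    _ = 2 * (μ.prod μ) (windowPairs 0) := by
        rw [Measure.measurePreserving_swap.measure_preimage
          (measurableSet_windowPairs 0).nullMeasurableSet, two_mul]

variable (hlat : μ (Set.range (fun n : ℕ => (n : ℝ)))ᶜ = 0)

include hlat

lemma rhoFun_le_measure_windowPairs (x : ℝ) : rhoFun μ x ≤ (μ.prod μ) (windowPairs x) := by
  rcases eq_or_ne x 0 with rfl | hx
  · have hnonneg := ae_nonneg_of_measure_compl_range_natCast hlat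
    rw [rhoFun_zero, one_sub_measure_singleton_zero hnonneg]
    exact ENNReal.div_le_of_le_mul'
      (measure_Ioi_zero_le_two_mul_measure_windowPairs_zero hnonneg)
  · rw [rhoFun_of_ne_zero hlat hx, measure_windowPairs]
    refine setLIntegral_mono' measurableSet_Ioi fun v hv => ?_
    rw [measure_Icc_eq_add_measure_Ioo_add μ (lt_add_of_pos_right x hv)]
    gcongr <;> exact ENNReal.half_le_self

lemma measure_windowPairs_le_two_mul_rhoFun (x : ℝ) :
    (μ.prod μ) (windowPairs x) ≤ 2 * rhoFun μ x := by
  rcases eq_or_ne x 0 with rfl | hx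
  · rw [rhoFun_zero, ENNReal.mul_div_cancel two_ne_zero ENNReal.ofNat_ne_top,
      one_sub_measure_singleton_zero (ae_nonneg_of_measure_compl_range_natCast hlat),
      measure_windowPairs]
    calc ∫⁻ v in Set.Ioi 0, μ (Set.Icc 0 (0 + v)) ∂μ ≤ ∫⁻ _ in Set.Ioi 0, 1 ∂μ :=
          lintegral_mono fun v => prob_le_one
      _ = μ (Set.Ioi 0) := setLIntegral_one _
  · rw [rhoFun_of_ne_zero hlat hx, measure_windowPairs,
      ← lintegral_const_mul' _ _ ENNReal.ofNat_ne_top]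
    refine setLIntegral_mono' measurableSet_Ioi fun v hv => ?_
    rw [measure_Icc_eq_add_measure_Ioo_add μ (lt_add_of_pos_right x hv), mul_add, mul_add,
      ENNReal.mul_div_cancel two_ne_zero ENNReal.ofNat_ne_top,
      ENNReal.mul_div_cancel two_ne_zero ENNReal.ofNat_ne_top]
    gcongr
    exact le_mul_of_one_le_left' one_le_two

end Comparison

section TotalMass

variable {μ : Measure ℝ} [IsProbabilityMeasure μ] {d : ℕ}

lemma tsum_measure_windowPairs_essClass_le (hd : d ≠ 0) (x₀ : ℝ) :
    ∑' x : essClass μ d x₀, (μ.prod μ) (windowPairs x) ≤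
      2 * (∑' k : ℕ, μ (Set.Ioi (k : ℝ)) ^ 2 + 1) := by
  have hcount (p : ℝ × ℝ) : ({x : essClass μ d x₀ | p ∈ windowPairs x}.encard : ℝ≥0∞) ≤
      2 * (⌈min p.1 p.2⌉₊ + 1) := by
    simpa using ENat.toENNReal_le.2 (encard_essClass_windowPairs_le p hd)
  rw [tsum_measure_windowPairs_eq_lintegral_encard _ countable_essClass,
    tsum_sq_measure_Ioi_eq_lintegral_ceil_min]
  refine (lintegral_mono hcount).trans_eq ?_
  rw [lintegral_const_mul' _ _ ENNReal.ofNat_ne_top, lintegral_add_right _ measurable_const]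
  simp

variable (hlat : μ (Set.range (fun n : ℕ => (n : ℝ)))ᶜ = 0)

include hlat

lemma tsum_sq_measure_Ioi_le (hd : d ≠ 0) (x₀ : ℝ) :
    ∑' k : ℕ, μ (Set.Ioi (k : ℝ)) ^ 2 ≤
      d * (∑' x : essClass μ d x₀, (μ.prod μ) (windowPairs x) + 1) := by
  have hcount : ∀ᵐ p ∂μ.prod μ, (⌈min p.1 p.2⌉₊ : ℝ≥0∞) ≤
      d * (({x : essClass μ d x₀ | p ∈ windowPairs x}.encard : ℝ≥0∞) + 1) := by
    filter_upwards [Measure.quasiMeasurePreserving_snd.ae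
      (ae_exists_natCast_eq_and_measure_singleton_ne_zero hlat)] with p ⟨n, hn, hatom⟩
    simpa using ENat.toENNReal_le.2
      (ceil_min_le_mul_encard_essClass_windowPairs p hd fun B hB => hn ▸ hB n hatom)
  rw [tsum_measure_windowPairs_eq_lintegral_encard _ countable_essClass,
    tsum_sq_measure_Ioi_eq_lintegral_ceil_min]
  refine (lintegral_mono_ae hcount).trans_eq ?_
  rw [lintegral_const_mul' _ _ (ENNReal.natCast_ne_top d), lintegral_add_right _ measurable_const]
  simp

end TotalMass

lemma ne_zero_of_forall_dvd {μ : Measure ℝ} [IsProbabilityMeasure μ]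
    (hlat : μ (Set.range (fun n : ℕ => (n : ℝ)))ᶜ = 0) (hnondeg : μ ≠ Measure.dirac 0) {d : ℕ}
    (hdvd : ∀ n : ℕ, μ {(n : ℝ)} ≠ 0 → d ∣ n) : d ≠ 0 := by
  rintro rfl
  refine hnondeg (eq_dirac_of_ae_eq ?_)
  filter_upwards [ae_exists_natCast_eq_and_measure_singleton_ne_zero hlat] with u ⟨n, hn, hatom⟩
  rw [← hn, Nat.eq_zero_of_zero_dvd (hdvd n hatom), Nat.cast_zero]

theorem rho_finite_mass_iff_quadratic_tail_general {μ : Measure ℝ} [IsProbabilityMeasure μ]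
    (hlat : μ (Set.range (fun n : ℕ => (n : ℝ)))ᶜ = 0) {d : ℕ} (hd : d ≠ 0) (x₀ : ℝ) :
    (∑' x : essClass μ d x₀, rhoFun μ x) < ⊤ ↔
      (∑' k : ℕ, (μ (Set.Ioi (k : ℝ))) ^ 2) < ⊤ := by
  constructor
  · intro hρ
    have hwindow : ∑' x : essClass μ d x₀, (μ.prod μ) (windowPairs x) < ⊤ :=
      calc ∑' x : essClass μ d x₀, (μ.prod μ) (windowPairs x)
          ≤ ∑' x : essClass μ d x₀, 2 * rhoFun μ x :=
            ENNReal.tsum_le_tsum fun x => measure_windowPairs_le_two_mul_rhoFun hlat x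
        _ = 2 * ∑' x : essClass μ d x₀, rhoFun μ x := ENNReal.tsum_mul_left
        _ < ⊤ := by finiteness
    exact (tsum_sq_measure_Ioi_le hlat hd x₀).trans_lt (by finiteness)
  · intro htail
    calc ∑' x : essClass μ d x₀, rhoFun μ x
        ≤ ∑' x : essClass μ d x₀, (μ.prod μ) (windowPairs x) :=
          ENNReal.tsum_le_tsum fun x => rhoFun_le_measure_windowPairs hlat x
      _ ≤ 2 * (∑' k : ℕ, μ (Set.Ioi (k : ℝ)) ^ 2 + 1) := tsum_measure_windowPairs_essClass_le hd x₀
      _ < ⊤ := by finiteness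

/-- In the lattice case, for every starting point `x₀ ≥ 0`, the total
mass `Σ_{x ∈ C(x₀)} ρ({x})` is finite if and only if
`Σ_{k=0}^∞ (1 - F_μ(k))² < ∞` (where `1 - F_μ(k) = μ((k,∞))`); in particular this does
not depend on the starting point `x₀`. -/
theorem rho_finite_mass_iff_quadratic_tail
    (μ : Measure ℝ) [IsProbabilityMeasure μ]
    (hlat : μ (Set.range (fun n : ℕ => (n : ℝ)))ᶜ = 0)
    (hnondeg : μ ≠ Measure.dirac 0)
    (d : ℕ)
    (hd1 : ∀ n : ℕ, μ {(n : ℝ)} ≠ 0 → d ∣ n)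
    (hd2 : ∀ e : ℕ, (∀ n : ℕ, μ {(n : ℝ)} ≠ 0 → e ∣ n) → e ∣ d)
    (x₀ : ℝ) (hx₀ : 0 ≤ x₀) :
    (∑' x : essClass μ d x₀, rhoFun μ x) < ⊤ ↔
      (∑' k : ℕ, (μ (Set.Ioi (k : ℝ))) ^ 2) < ⊤ :=
  rho_finite_mass_iff_quadratic_tail_general hlat (ne_zero_of_forall_dvd hlat hnondeg hd1) x₀
end

section
/- If Σ_{k≥0} √k · μ({k}) < ∞, then Σ_{n=0}^∞ (1 − F_μ(n))² ≤ ( Σ_{k≥0} √k · μ({k}) )² < ∞; that is, a finite moment of order 1/2 implies the quadratic tail condition. -/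
open MeasureTheory Filter
open scoped ENNReal

/-!
If `x` and `y` are drawn independently from a probability measure `μ`, then `∑ i, μ (s i) ^ 2` is
the expected number of indices `i` with `x, y ∈ s i`; as a double integral this makes sense for any
measure. When `s n = {n < f}` this number is `min (f x) (f y) ≤ √(f x) * √(f y)`, and the double
integral of the right-hand side factors into the square of the moment of order `1/2` of `f`. On `ℝ`
one takes `f = ⌈·⌉₊`, as `n < ⌈x⌉₊ ↔ n < x`.
-/

lemma min_le_sqrt_mul_sqrt (a b : ℝ) : min a b ≤ √a * √b := by
  rcases le_total 0 (min a b) with hmin | hmin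
  · calc
      min a b = √(min a b) * √(min a b) := (Real.mul_self_sqrt hmin).symm
      _ ≤ √a * √b := by
        gcongr
        · exact min_le_left a b
        · exact min_le_right a b
  · exact hmin.trans (by positivity)

section

variable {α ι : Type*} [MeasurableSpace α] {μ : Measure α} [Countable ι]

lemma lintegral_eq_tsum_of_measure_compl_range_eq_zero [MeasurableSingletonClass α] {e : ι → α}
    (he : Function.Injective e) (hμ : μ (Set.range e)ᶜ = 0) (f : α → ℝ≥0∞) :
    ∫⁻ x, f x ∂μ = ∑' i, f (e i) * μ {e i} := by
  calc
    ∫⁻ x, f x ∂μ = ∫⁻ x in Set.range e, f x ∂μ := by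
      rw [Measure.restrict_eq_self_of_ae_mem (s := Set.range e) (mem_ae_iff.mpr hμ)]
    _ = ∑' x : Set.range e, f x * μ {(x : α)} := lintegral_countable f (Set.countable_range e)
    _ = ∑' i, f (e i) * μ {e i} := tsum_range (fun x ↦ f x * μ {x}) he

lemma tsum_measure_sq_eq_lintegral_lintegral_encard {s : ι → Set α}
    (hs : ∀ i, NullMeasurableSet (s i) μ) :
    ∑' i, μ (s i) ^ 2 = ∫⁻ x, ∫⁻ y, ({i | x ∈ s i ∧ y ∈ s i}.encard : ℝ≥0∞) ∂μ ∂μ := by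
  let χ (i : ι) : α → ℝ≥0∞ := (s i).indicator 1
  have hχ (i : ι) : AEMeasurable (χ i) μ := aemeasurable_one.indicator₀ (hs i)
  have hcount (x y : α) : ∑' i, χ i x * χ i y = ({i | x ∈ s i ∧ y ∈ s i}.encard : ℝ≥0∞) := by
    rw [← ENNReal.tsum_set_one, tsum_subtype {i | x ∈ s i ∧ y ∈ s i} fun _ ↦ (1 : ℝ≥0∞)]
    refine tsum_congr fun i ↦ ?_
    by_cases hx : x ∈ s i <;> by_cases hy : y ∈ s i <;> simp [χ, hx, hy]
  calc
    ∑' i, μ (s i) ^ 2 = ∑' i, ∫⁻ x, ∫⁻ y, χ i x * χ i y ∂μ ∂μ := by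
      refine tsum_congr fun i ↦ ?_
      rw [lintegral_lintegral_mul (hχ i) (hχ i), lintegral_indicator_one₀ (hs i), sq]
    _ = ∫⁻ x, ∑' i, ∫⁻ y, χ i x * χ i y ∂μ ∂μ := by
      refine (lintegral_tsum fun i ↦ ?_).symm
      simpa only [lintegral_const_mul'' _ (hχ i)] using (hχ i).mul_const _
    _ = ∫⁻ x, ∫⁻ y, ∑' i, χ i x * χ i y ∂μ ∂μ :=
      lintegral_congr fun x ↦ (lintegral_tsum fun i ↦ (hχ i).const_mul (χ i x)).symm
    _ = ∫⁻ x, ∫⁻ y, ({i | x ∈ s i ∧ y ∈ s i}.encard : ℝ≥0∞) ∂μ ∂μ := by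
      simp only [hcount]

lemma tsum_measure_lt_sq_le_sq_lintegral_sqrt {f : α → ℕ} (hf : AEMeasurable f μ) :
    ∑' n, μ {x | n < f x} ^ 2 ≤ (∫⁻ x, ENNReal.ofReal √(f x) ∂μ) ^ 2 := by
  have hsqrt : AEMeasurable (fun x ↦ ENNReal.ofReal √(f x)) μ :=
    (measurable_from_top (f := fun n : ℕ ↦ ENNReal.ofReal √n)).comp_aemeasurable hf
  have hcount (x y : α) : ({n | n < f x ∧ n < f y}.encard : ℝ≥0∞) ≤
      ENNReal.ofReal √(f x) * ENNReal.ofReal √(f y) := by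
    have hrange : {n | n < f x ∧ n < f y} = (Finset.range (min (f x) (f y)) : Set ℕ) := by
      ext n; simp
    rw [hrange, Set.encard_coe_eq_coe_finsetCard, Finset.card_range, ENat.toENNReal_coe,
      ← ENNReal.ofReal_natCast, ← ENNReal.ofReal_mul (Real.sqrt_nonneg _), Nat.cast_min]
    exact ENNReal.ofReal_le_ofReal (min_le_sqrt_mul_sqrt _ _)
  calc
    ∑' n, μ {x | n < f x} ^ 2 = ∫⁻ x, ∫⁻ y, ({n | n < f x ∧ n < f y}.encard : ℝ≥0∞) ∂μ ∂μ :=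
      tsum_measure_sq_eq_lintegral_lintegral_encard fun n ↦
        hf.nullMeasurableSet_preimage measurableSet_Ioi
    _ ≤ ∫⁻ x, ∫⁻ y, ENNReal.ofReal √(f x) * ENNReal.ofReal √(f y) ∂μ ∂μ :=
      lintegral_mono fun x ↦ lintegral_mono fun y ↦ hcount x y
    _ = (∫⁻ x, ENNReal.ofReal √(f x) ∂μ) ^ 2 := by
      rw [lintegral_lintegral_mul hsqrt hsqrt, sq]

end

theorem half_moment_implies_quadratic_tail_general (μ : Measure ℝ) :
    ∑' n : ℕ, μ (Set.Ioi (n : ℝ)) ^ 2 ≤ (∫⁻ x, ENNReal.ofReal √⌈x⌉₊ ∂μ) ^ 2 := by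
  simpa only [Nat.lt_ceil, Set.Ioi_def] using
    tsum_measure_lt_sq_le_sq_lintegral_sqrt (μ := μ) Nat.measurable_ceil.aemeasurable

/-- For a probability measure `μ` on `ℕ₀` (viewed on `ℝ`), if
`Σ_k √k μ({k}) < ∞` then `Σ_n (1 - F_μ(n))² ≤ (Σ_k √k μ({k}))² < ∞`: a finite moment of
order `1/2` implies the quadratic tail condition. Here `1 - F_μ(n) = μ((n,∞))`. -/
theorem half_moment_implies_quadratic_tail
    (μ : Measure ℝ) [IsProbabilityMeasure μ]
    (hlat : μ (Set.range (fun n : ℕ => (n : ℝ)))ᶜ = 0)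
    (hmom : (∑' k : ℕ, ENNReal.ofReal (Real.sqrt k) * μ {(k : ℝ)}) < ⊤) :
    (∑' n : ℕ, (μ (Set.Ioi (n : ℝ))) ^ 2) ≤
        (∑' k : ℕ, ENNReal.ofReal (Real.sqrt k) * μ {(k : ℝ)}) ^ 2 ∧
      (∑' n : ℕ, (μ (Set.Ioi (n : ℝ))) ^ 2) < ⊤ := by
  have hle := half_moment_implies_quadratic_tail_general μ
  simp only [lintegral_eq_tsum_of_measure_compl_range_eq_zero Nat.cast_injective hlat,
    Nat.ceil_natCast] at hle
  exact ⟨hle, hle.trans_lt (ENNReal.pow_lt_top hmom)⟩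
end

section
/- The measure ν(dx) = (1 − F_μ(x)) dx on C (where dx is Lebesgue measure) is an invariant measure for the transition kernel p of the reflected random walk: for every Borel set B ⊆ [0,∞), ∫_{[0,∞)} p(x,B) (1 − F_μ(x)) dx = ∫_B (1 − F_μ(x)) dx. -/
open MeasureTheory Filter
open scoped ENNReal

/-!
Let `Y` and `Z` be independent with law `μ`. By Tonelli, `μ (Ioi x)` being the probability of
`x < Z`, the mass that one step from `ν` puts on `B` is the expected Lebesgue measure of
`{x ∈ [0, Z) : |x - Y| ∈ B}`, while `ν B` is the expected Lebesgue measure of `B ∩ [0, Z)`.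
The two integrands differ, but become equal after symmetrisation in `(Y, Z)`: for `y ≤ z`, the map
`x ↦ |x - y|` carries `[0, y)` onto `(0, y]` and `[y, z)` onto `[0, z - y)`, and `x ↦ |x - z|`
carries `[0, y)` onto the missing piece `(z - y, z]` of `[0, z]`.
-/

section LinearOrder

variable {α : Type*} [TopologicalSpace α] [LinearOrder α] [OrderClosedTopology α]
  [MeasurableSpace α] [OpensMeasurableSpace α]

lemma measure_inter_Ico_add_measure_inter_Ico (μ : Measure α) (s : Set α) {a b c : α}
    (hab : a ≤ b) (hbc : b ≤ c) :
    μ (s ∩ Set.Ico a b) + μ (s ∩ Set.Ico b c) = μ (s ∩ Set.Ico a c) := by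
  rw [← measure_inter_add_sdiff (s ∩ Set.Ico a c) (measurableSet_Iio (a := b))]
  congr 2 <;> ext x <;> grind

lemma lintegral_measure_Ioi [SecondCountableTopology α] (μ ν : Measure α) [SFinite μ]
    [SFinite ν] :
    ∫⁻ x, μ (Set.Ioi x) ∂ν = ∫⁻ y, ν (Set.Iio y) ∂μ :=
  have hlt : MeasurableSet {q : α × α | q.1 < q.2} :=
    measurableSet_lt measurable_fst measurable_snd
  (Measure.prod_apply hlt).symm.trans (Measure.prod_apply_symm hlt)

end LinearOrder

lemma lintegral_prod_self_eq_of_add_swap {α : Type*} [MeasurableSpace α] {μ : Measure α}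
    [SFinite μ] {f : α × α → ℝ≥0∞} {g : α → ℝ≥0∞} (hf : Measurable f) (hg : Measurable g)
    (h : ∀ᵐ p ∂μ.prod μ, f p + f p.swap = g p.1 + g p.2) :
    ∫⁻ p, f p ∂μ.prod μ = μ Set.univ * ∫⁻ x, g x ∂μ := by
  have hfst : ∫⁻ p, g p.1 ∂μ.prod μ = μ Set.univ * ∫⁻ x, g x ∂μ := by
    rw [← lintegral_map hg measurable_fst, Measure.map_fst_prod, lintegral_smul_measure,
      smul_eq_mul]
  have hsnd : ∫⁻ p, g p.2 ∂μ.prod μ = μ Set.univ * ∫⁻ x, g x ∂μ := by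
    rw [← lintegral_map hg measurable_snd, Measure.map_snd_prod, lintegral_smul_measure,
      smul_eq_mul]
  have hdouble : 2 * ∫⁻ p, f p ∂μ.prod μ = 2 * (μ Set.univ * ∫⁻ x, g x ∂μ) :=
    calc 2 * ∫⁻ p, f p ∂μ.prod μ
        = ∫⁻ p, f p + f p.swap ∂μ.prod μ := by
          rw [lintegral_add_left hf, lintegral_prod_swap, two_mul]
      _ = ∫⁻ p, g p.1 + g p.2 ∂μ.prod μ := lintegral_congr_ae h
      _ = 2 * (μ Set.univ * ∫⁻ x, g x ∂μ) := by
          rw [lintegral_add_left (by fun_prop), hfst, hsnd, two_mul]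
  exact (ENNReal.mul_right_inj two_ne_zero ENNReal.ofNat_ne_top).1 hdouble

/-- The Lebesgue measure of the starting points in `[0, z)` that a reflected jump of size `y`
sends into `B`. -/
noncomputable def reflectedVolume (B : Set ℝ) (y z : ℝ) : ℝ≥0∞ :=
  volume ({x : ℝ | |x - y| ∈ B} ∩ Set.Ico 0 z)

section reflectedVolume

variable {B : Set ℝ} {y z : ℝ}

lemma reflectedVolume_of_le (hzy : z ≤ y) :
    reflectedVolume B y z = volume (B ∩ Set.Ico (y - z) y) := by
  have hset : {x : ℝ | |x - y| ∈ B} ∩ Set.Ico 0 z =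
      (fun x => y - x) ⁻¹' (B ∩ Set.Ioc (y - z) y) := by
    ext x
    have habs (hxy : x ≤ y) : |x - y| = y - x := by
      rw [abs_sub_comm, abs_of_nonneg (sub_nonneg.2 hxy)]
    simp only [Set.mem_inter_iff, Set.mem_ofPred_eq, Set.mem_Ico, Set.mem_preimage,
      Set.mem_Ioc]
    grind
  rw [reflectedVolume, hset, (Measure.measurePreserving_sub_left volume y).measure_preimage_emb
    (MeasurableEquiv.subLeft y).measurableEmbedding]
  exact measure_congr ((ae_eq_refl B).inter Ico_ae_eq_Ioc.symm)

lemma volume_abs_sub_mem_inter_Ico :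
    volume ({x : ℝ | |x - y| ∈ B} ∩ Set.Ico y z) = volume (B ∩ Set.Ico 0 (z - y)) := by
  have hset : {x : ℝ | |x - y| ∈ B} ∩ Set.Ico y z =
      (fun x => x - y) ⁻¹' (B ∩ Set.Ico 0 (z - y)) := by
    ext x
    have habs (hyx : y ≤ x) : |x - y| = x - y := abs_of_nonneg (sub_nonneg.2 hyx)
    simp only [Set.mem_inter_iff, Set.mem_ofPred_eq, Set.mem_Ico, Set.mem_preimage]
    grind
  rw [hset, (measurePreserving_sub_right volume y).measure_preimage_emb
    (MeasurableEquiv.subRight y).measurableEmbedding]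

lemma reflectedVolume_of_ge (hy : 0 ≤ y) (hyz : y ≤ z) :
    reflectedVolume B y z = volume (B ∩ Set.Ico 0 y) + volume (B ∩ Set.Ico 0 (z - y)) := by
  have hleft : volume ({x : ℝ | |x - y| ∈ B} ∩ Set.Ico 0 y) = volume (B ∩ Set.Ico 0 y) := by
    simpa only [reflectedVolume, sub_self] using reflectedVolume_of_le (B := B) (le_refl y)
  rw [reflectedVolume, ← measure_inter_Ico_add_measure_inter_Ico volume _ hy hyz, hleft,
    volume_abs_sub_mem_inter_Ico]

lemma reflectedVolume_add_swap (hy : 0 ≤ y) (hz : 0 ≤ z) :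
    reflectedVolume B y z + reflectedVolume B z y =
      volume (B ∩ Set.Ico 0 y) + volume (B ∩ Set.Ico 0 z) := by
  wlog hyz : y ≤ z generalizing y z
  · rw [add_comm, this hz hy (le_of_not_ge hyz), add_comm]
  rw [reflectedVolume_of_ge hy hyz, reflectedVolume_of_le hyz, add_assoc,
    measure_inter_Ico_add_measure_inter_Ico volume B (sub_nonneg.2 hyz) (sub_le_self z hy)]

lemma volume_restrict_Ici_abs_sub_mem_and_lt :
    volume.restrict (Set.Ici 0) {x : ℝ | |x - y| ∈ B ∧ x < z} = reflectedVolume B y z := by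
  rw [Measure.restrict_apply' measurableSet_Ici, reflectedVolume]
  congr 1
  ext x
  simp only [Set.mem_inter_iff, Set.mem_ofPred_eq, Set.mem_Ici, Set.mem_Ico]
  tauto

lemma measurableSet_abs_sub_mem_and_lt (hB : MeasurableSet B) :
    MeasurableSet {q : ℝ × (ℝ × ℝ) | |q.1 - q.2.1| ∈ B ∧ q.1 < q.2.2} := by
  have habs : Measurable fun q : ℝ × (ℝ × ℝ) => |q.1 - q.2.1| := by fun_prop
  exact (habs hB).inter (measurableSet_lt measurable_fst (measurable_snd.comp measurable_snd))

lemma measurable_reflectedVolume (hB : MeasurableSet B) :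
    Measurable fun p : ℝ × ℝ => reflectedVolume B p.1 p.2 := by
  simp_rw [← volume_restrict_Ici_abs_sub_mem_and_lt]
  exact measurable_measure_prodMk_right (measurableSet_abs_sub_mem_and_lt hB)

lemma setLIntegral_measure_mul_measure_Ioi (μ ν : Measure ℝ) [SFinite μ] [SFinite ν]
    (hB : MeasurableSet B) :
    ∫⁻ x in Set.Ici 0, μ {y | |x - y| ∈ B} * ν (Set.Ioi x) =
      ∫⁻ p, reflectedVolume B p.1 p.2 ∂μ.prod ν := by
  simp_rw [← Measure.prod_prod, ← volume_restrict_Ici_abs_sub_mem_and_lt]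
  have hmeas := measurableSet_abs_sub_mem_and_lt hB
  exact (Measure.prod_apply hmeas).symm.trans (Measure.prod_apply_symm hmeas)

lemma lintegral_reflectedVolume_prod_self {μ : Measure ℝ} [SFinite μ] (hμ : ∀ᵐ y ∂μ, 0 ≤ y)
    (hB : MeasurableSet B) :
    ∫⁻ p, reflectedVolume B p.1 p.2 ∂μ.prod μ =
      μ Set.univ * ∫⁻ y, volume (B ∩ Set.Ico 0 y) ∂μ := by
  have hmono : Monotone fun y : ℝ => volume (B ∩ Set.Ico 0 y) := fun _ _ h =>
    measure_mono (Set.inter_subset_inter_right B (Set.Ico_subset_Ico_right h))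
  refine lintegral_prod_self_eq_of_add_swap (measurable_reflectedVolume hB) hmono.measurable ?_
  filter_upwards [Measure.quasiMeasurePreserving_fst.ae hμ,
    Measure.quasiMeasurePreserving_snd.ae hμ] with p hy hz
  exact reflectedVolume_add_swap hy hz

lemma setLIntegral_inter_Ici_measure_Ioi (μ : Measure ℝ) [SFinite μ] :
    ∫⁻ x in B ∩ Set.Ici 0, μ (Set.Ioi x) = ∫⁻ y, volume (B ∩ Set.Ico 0 y) ∂μ := by
  rw [lintegral_measure_Ioi]
  refine lintegral_congr fun y => ?_
  rw [Measure.restrict_apply measurableSet_Iio, Set.inter_comm, Set.inter_assoc,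
    Set.Ici_inter_Iio]

end reflectedVolume

/-- The left-hand side is quadratic in `μ`, whence the factor `μ (Set.Ici 0)` on the right. -/
theorem nu_invariant_nonlattice_general (μ : Measure ℝ) [SFinite μ] {B : Set ℝ}
    (hB : MeasurableSet B) :
    ∫⁻ x in Set.Ici (0 : ℝ), μ {y : ℝ | 0 ≤ y ∧ |x - y| ∈ B} * μ (Set.Ioi x) =
      μ (Set.Ici 0) * ∫⁻ x in B ∩ Set.Ici 0, μ (Set.Ioi x) := by
  set ρ := μ.restrict (Set.Ici 0)
  have hkernel (x : ℝ) : μ {y : ℝ | 0 ≤ y ∧ |x - y| ∈ B} = ρ {y | |x - y| ∈ B} := by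
    rw [Measure.restrict_apply' measurableSet_Ici, Set.inter_comm]
    rfl
  have htail {x : ℝ} (hx : x ∈ Set.Ici 0) : μ (Set.Ioi x) = ρ (Set.Ioi x) :=
    (Measure.restrict_eq_self μ fun _ hy => (Set.mem_Ici.1 hx).trans hy.le).symm
  calc ∫⁻ x in Set.Ici (0 : ℝ), μ {y : ℝ | 0 ≤ y ∧ |x - y| ∈ B} * μ (Set.Ioi x)
      = ∫⁻ x in Set.Ici 0, ρ {y | |x - y| ∈ B} * ρ (Set.Ioi x) :=
        setLIntegral_congr_fun measurableSet_Ici fun x hx => by rw [hkernel, htail hx]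
    _ = ∫⁻ p, reflectedVolume B p.1 p.2 ∂ρ.prod ρ := setLIntegral_measure_mul_measure_Ioi ρ ρ hB
    _ = ρ Set.univ * ∫⁻ y, volume (B ∩ Set.Ico 0 y) ∂ρ :=
        lintegral_reflectedVolume_prod_self (ae_restrict_mem measurableSet_Ici) hB
    _ = μ (Set.Ici 0) * ∫⁻ x in B ∩ Set.Ici 0, ρ (Set.Ioi x) := by
        rw [Measure.restrict_apply_univ, setLIntegral_inter_Ici_measure_Ioi ρ]
    _ = μ (Set.Ici 0) * ∫⁻ x in B ∩ Set.Ici 0, μ (Set.Ioi x) := by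
        rw [setLIntegral_congr_fun (hB.inter measurableSet_Ici) fun x hx => htail hx.2]

/-- In the non-lattice case, the measure `ν(dx) = (1 - F_μ(x)) dx`
(with `1 - F_μ(x) = μ((x,∞))`) is invariant for the transition kernel
`p(x,B) = μ({y ≥ 0 : |x-y| ∈ B})` of the reflected random walk: for every Borel set
`B ⊆ [0,∞)`, `∫_{[0,∞)} p(x,B)(1 - F_μ(x)) dx = ∫_B (1 - F_μ(x)) dx`. -/
theorem nu_invariant_nonlattice
    (μ : Measure ℝ) [IsProbabilityMeasure μ]
    (hpos : μ (Set.Iio 0) = 0) (hnondeg : μ ≠ Measure.dirac 0)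
    (hnonlat : ∀ κ : ℝ, 0 < κ → μ ({x : ℝ | ∃ n : ℕ, x = κ * n})ᶜ ≠ 0)
    (B : Set ℝ) (hB : MeasurableSet B) (hBpos : B ⊆ Set.Ici 0) :
    ∫⁻ x in Set.Ici (0 : ℝ), μ {y : ℝ | 0 ≤ y ∧ |x - y| ∈ B} * μ (Set.Ioi x) =
      ∫⁻ x in B, μ (Set.Ioi x) := by
  have hmass : μ (Set.Ici 0) = 1 := by
    rwa [← Set.compl_Iio, prob_compl_eq_one_iff measurableSet_Iio]
  rw [nu_invariant_nonlattice_general μ hB, hmass, one_mul, Set.inter_eq_left.2 hBpos]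
end

section
/- In the non-lattice case, the measure ρ(dx) = h(x) dx on C with density h(x) = ∫_{[0,∞)} μ((x, x+y]) μ(dy) (with respect to Lebesgue measure) is an invariant measure for the process of reflections: for every Borel set B ⊆ [0,∞), ∫_{(0,∞)} q(x,B) h(x) dx = ∫_B h(x) dx, where q(x,B) = ∫_{[0,x)} μ(B + x − w) U(dw) for x > 0. -/
open MeasureTheory Filter
open scoped ENNReal

/-- The `n`-fold convolution power `μ^{(n)}` of a measure `μ` on `ℝ`, with
`μ^{(0)} = δ_0`. -/
noncomputable def convPow (μ : MeasureTheory.Measure ℝ) : ℕ → MeasureTheory.Measure ℝ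
  | 0 => MeasureTheory.Measure.dirac 0
  | n + 1 => MeasureTheory.Measure.map (fun p : ℝ × ℝ => p.1 + p.2) ((convPow μ n).prod μ)

/-- The potential measure `U = Σ_{n=0}^∞ μ^{(n)}`. -/
noncomputable def potential (μ : MeasureTheory.Measure ℝ) : MeasureTheory.Measure ℝ :=
  MeasureTheory.Measure.sum (fun n => convPow μ n)

/-- The density `h(x) = ∫_{[0,∞)} μ((x, x+y]) μ(dy)` of the invariant measure `ρ` of
the process of reflections. -/
noncomputable def reflDensity (μ : MeasureTheory.Measure ℝ) (x : ℝ) : ℝ≥0∞ :=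
  ∫⁻ y in Set.Ici (0 : ℝ), μ (Set.Ioc x (x + y)) ∂μ

/-!
Write `T x = μ (x, ∞)` and `P f x = ∫ f (x + y) μ(dy)`. Splitting `(x, ∞)` at `x + y` gives
`h + P T = T`; iterating, `T` is the potential of `h` plus `lim Pⁿ T`, and this limit vanishes
because the random walk leaves every half-line. So `∫ h (v + w) U(dw) = T v`.

In `∫ q(x, B) h(x) dx`, let `v = x - w` be the position just before a reflection. Translation
invariance of Lebesgue measure and the potential identity turn the integral into
`∫ μ (B + v) T v dv` over `v > 0`. Lebesgue-almost everywhere `T v = μ [v, ∞)`, so the reflection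
`v ↦ y - v` transforms it into the integral over `b ∈ B` of `∫ 1_{y > b} μ [y - b, ∞) μ(dy)`,
which is `h b` by Tonelli.
-/

open Set Topology

section Tonelli

theorem lintegral_measure_setOf_swap {α β : Type*} [MeasurableSpace α] [MeasurableSpace β]
    {μ : Measure α} {ν : Measure β} [SFinite μ] [SFinite ν] {r : α → β → Prop}
    (hr : MeasurableSet {p : α × β | r p.1 p.2}) :
    ∫⁻ a, ν {b | r a b} ∂μ = ∫⁻ b, μ {a | r a b} ∂ν :=
  (Measure.prod_apply hr).symm.trans (Measure.prod_apply_symm hr)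

variable {G : Type*} [MeasurableSpace G] [AddCommGroup G] [MeasurableAdd₂ G] [MeasurableNeg G]
  {m ν : Measure G} [SFinite m] [m.IsAddLeftInvariant] [SFinite ν] {f g : G → ℝ≥0∞}

theorem measurable_measure_image_add_right {B : Set G} (hB : MeasurableSet B) :
    Measurable fun v => ν ((· + v) '' B) := by
  simp only [image_add_right]
  exact measurable_measure_prodMk_left ((measurable_snd.add measurable_fst.neg) hB)

theorem lintegral_lintegral_sub_mul_eq (hf : Measurable f) (hg : Measurable g) :
    ∫⁻ x, (∫⁻ w, g (x - w) ∂ν) * f x ∂m = ∫⁻ v, g v * (∫⁻ w, f (v + w) ∂ν) ∂m := by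
  calc
    _ = ∫⁻ x, ∫⁻ w, g (x - w) * f x ∂ν ∂m :=
      lintegral_congr fun x => (lintegral_mul_const _ (by fun_prop)).symm
    _ = ∫⁻ w, ∫⁻ x, g (x - w) * f x ∂m ∂ν := lintegral_lintegral_swap (by fun_prop)
    _ = ∫⁻ w, ∫⁻ v, g v * f (v + w) ∂m ∂ν := by
      refine lintegral_congr fun w => ?_
      simpa only [add_sub_cancel_right] using
        (lintegral_add_right_eq_self (fun x => g (x - w) * f x) w).symm
    _ = ∫⁻ v, ∫⁻ w, g v * f (v + w) ∂ν ∂m := lintegral_lintegral_swap (by fun_prop)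
    _ = _ := lintegral_congr fun v => lintegral_const_mul _ (by fun_prop)

theorem lintegral_lintegral_sub_left_mul_eq [m.IsNegInvariant]
    (hf : Measurable f) (hg : Measurable g) :
    ∫⁻ v, (∫⁻ y, f (y - v) ∂ν) * g v ∂m = ∫⁻ b, f b * (∫⁻ y, g (y - b) ∂ν) ∂m := by
  calc
    _ = ∫⁻ v, ∫⁻ y, f (y - v) * g v ∂ν ∂m :=
      lintegral_congr fun v => (lintegral_mul_const _ (by fun_prop)).symm
    _ = ∫⁻ y, ∫⁻ v, f (y - v) * g v ∂m ∂ν := lintegral_lintegral_swap (by fun_prop)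
    _ = ∫⁻ y, ∫⁻ b, f b * g (y - b) ∂m ∂ν := by
      refine lintegral_congr fun y => ?_
      simpa only [sub_sub_cancel] using
        (lintegral_sub_left_eq_self (fun v => f (y - v) * g v) y).symm
    _ = ∫⁻ b, ∫⁻ y, f b * g (y - b) ∂ν ∂m := lintegral_lintegral_swap (by fun_prop)
    _ = _ := lintegral_congr fun b => lintegral_const_mul _ (by fun_prop)

theorem setLIntegral_Ioi_lintegral_Ico_sub_mul_eq {ν : Measure ℝ} [SFinite ν] {f g : ℝ → ℝ≥0∞}
    (hf : Measurable f) (hg : Measurable g) :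
    ∫⁻ x in Ioi 0, (∫⁻ w in Ico 0 x, g (x - w) ∂ν) * f x =
      ∫⁻ v in Ioi 0, g v * ∫⁻ w in Ici 0, f (v + w) ∂ν := by
  have indicator_sub (x w : ℝ) :
      (Ioi 0).indicator g (x - w) = (Iio x).indicator (fun w => g (x - w)) w := by
    simp only [indicator, mem_Ioi, mem_Iio, sub_pos]
  calc
    _ = ∫⁻ x, (∫⁻ w in Ico 0 x, g (x - w) ∂ν) * f x :=
      setLIntegral_eq_of_support_subset fun x hx => by
        by_contra hx0
        simp [Ico_eq_empty (show ¬0 < x from hx0)] at hx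
    _ = ∫⁻ x, (∫⁻ w in Ici 0, (Ioi 0).indicator g (x - w) ∂ν) * f x := by
      simp only [indicator_sub, lintegral_indicator measurableSet_Iio,
        Measure.restrict_restrict measurableSet_Iio, Iio_inter_Ici]
    _ = ∫⁻ v, (Ioi 0).indicator g v * ∫⁻ w in Ici 0, f (v + w) ∂ν :=
      lintegral_lintegral_sub_mul_eq hf (hg.indicator measurableSet_Ioi)
    _ = _ := by
      simp only [← lintegral_indicator measurableSet_Ioi, indicator_mul_left]

end Tonelli

section Tail

variable {α : Type*} [MeasurableSpace α]

theorem measurable_measure_Ioi [LinearOrder α] [TopologicalSpace α] [OrderClosedTopology α]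
    [BorelSpace α] (μ : Measure α) : Measurable fun x => μ (Ioi x) :=
  Antitone.measurable fun _ _ h => measure_mono (Ioi_subset_Ioi h)

theorem measurable_measure_Ici [LinearOrder α] [TopologicalSpace α] [OrderClosedTopology α]
    [BorelSpace α] (μ : Measure α) : Measurable fun x => μ (Ici x) :=
  Antitone.measurable fun _ _ h => measure_mono (Ici_subset_Ici.2 h)

theorem ae_measure_Ioi_eq_measure_Ici [PartialOrder α] [MeasurableSingletonClass α]
    (μ ν : Measure α) [SFinite μ] [NullSingletonClass ν] :
    ∀ᵐ x ∂ν, μ (Ioi x) = μ (Ici x) := by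
  have countable_atoms : {x | 0 < μ {x}}.Countable :=
    Measure.countable_meas_level_set_pos measurable_id
  filter_upwards [countable_atoms.ae_notMem ν] with x hx
  exact measure_congr (Ioi_ae_eq_Ici' (by simpa using hx))

end Tail

section Walk

variable {μ : Measure ℝ}

theorem convPow_succ (μ : Measure ℝ) (n : ℕ) : convPow μ (n + 1) = (convPow μ n).conv μ := rfl

instance convPow_sFinite [SFinite μ] (n : ℕ) : SFinite (convPow μ n) := by
  induction n with
  | zero => exact inferInstanceAs (SFinite (Measure.dirac 0))
  | succ n ih => rw [convPow_succ]; infer_instance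

instance convPow_isProbabilityMeasure [IsProbabilityMeasure μ] (n : ℕ) :
    IsProbabilityMeasure (convPow μ n) := by
  induction n with
  | zero => exact Measure.dirac.isProbabilityMeasure
  | succ n ih => rw [convPow_succ]; infer_instance

instance potential_sFinite [SFinite μ] : SFinite (potential μ) := by
  unfold potential; infer_instance

theorem ae_convPow_nonneg (hμ : ∀ᵐ y ∂μ, 0 ≤ y) (n : ℕ) :
    ∀ᵐ w ∂convPow μ n, 0 ≤ w := by
  induction n with
  | zero => simp [convPow, ae_dirac_eq]
  | succ n ih =>
    rw [convPow, ae_map_iff (by fun_prop) measurableSet_Ici]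
    filter_upwards [Measure.quasiMeasurePreserving_fst.ae ih,
      Measure.quasiMeasurePreserving_snd.ae hμ] with p using add_nonneg

theorem ae_potential_nonneg (hμ : ∀ᵐ y ∂μ, 0 ≤ y) : ∀ᵐ w ∂potential μ, 0 ≤ w :=
  Measure.ae_sum_iff.2 (ae_convPow_nonneg hμ)

theorem lintegral_exp_mul_convPow [SFinite μ] (t : ℝ) (n : ℕ) :
    ∫⁻ w, ENNReal.ofReal (Real.exp (t * w)) ∂convPow μ n =
      (∫⁻ y, ENNReal.ofReal (Real.exp (t * y)) ∂μ) ^ n := by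
  induction n with
  | zero => simp [convPow]
  | succ n ih =>
    rw [convPow_succ, Measure.lintegral_conv (by fun_prop)]
    simp only [mul_add, Real.exp_add, ENNReal.ofReal_mul (Real.exp_pos _).le]
    rw [lintegral_lintegral_mul (by fun_prop) (by fun_prop), ih, pow_succ]

theorem lintegral_exp_mul_lt_one [IsProbabilityMeasure μ] (hμ : ∀ᵐ y ∂μ, 0 ≤ y)
    (hμ0 : μ ≠ Measure.dirac 0) {t : ℝ} (ht : t < 0) :
    ∫⁻ y, ENNReal.ofReal (Real.exp (t * y)) ∂μ < 1 := by
  have exp_le_one : ∀ᵐ y ∂μ, ENNReal.ofReal (Real.exp (t * y)) ≤ 1 := by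
    filter_upwards [hμ] with y hy
    simpa using mul_nonpos_of_nonpos_of_nonneg ht.le hy
  have le_one := lintegral_mono_ae exp_le_one
  rw [lintegral_one, measure_univ] at le_one
  refine le_one.lt_of_ne fun eq_one => hμ0 ?_
  have exp_eq_one := ae_eq_of_ae_le_of_lintegral_le exp_le_one (by simp [eq_one])
    aemeasurable_const (by simp [eq_one])
  have ae_zero : id =ᵐ[μ] fun _ => (0 : ℝ) := by
    filter_upwards [exp_eq_one] with y hy
    simpa [ht.ne] using hy
  simpa using Measure.map_congr ae_zero

theorem tendsto_convPow_Iio [IsProbabilityMeasure μ] (hμ : ∀ᵐ y ∂μ, 0 ≤ y)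
    (hμ0 : μ ≠ Measure.dirac 0) (a : ℝ) :
    Tendsto (fun n => convPow μ n (Iio a)) atTop (𝓝 0) := by
  set L := ∫⁻ y, ENNReal.ofReal (Real.exp (-1 * y)) ∂μ
  have chernoff (n : ℕ) : convPow μ n (Iio a) ≤ L ^ n / ENNReal.ofReal (Real.exp (-a)) := by
    rw [← lintegral_exp_mul_convPow]
    refine (measure_mono fun w (hw : w < a) => ?_).trans
      (meas_ge_le_lintegral_div (by fun_prop) (by simp [Real.exp_pos]) ENNReal.ofReal_ne_top)
    exact ENNReal.ofReal_le_ofReal (Real.exp_le_exp.2 (by linarith))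
  have L_pow : Tendsto (fun n => L ^ n) atTop (𝓝 0) :=
    ENNReal.tendsto_pow_atTop_nhds_zero_of_lt_one (lintegral_exp_mul_lt_one hμ hμ0 (by norm_num))
  refine tendsto_of_tendsto_of_tendsto_of_le_of_le tendsto_const_nhds ?_ (fun _ => zero_le) chernoff
  simpa using ENNReal.Tendsto.div_const L_pow (.inr (by simp [Real.exp_pos]))

theorem tendsto_lintegral_measure_Ioi_convPow [IsProbabilityMeasure μ] (hμ : ∀ᵐ y ∂μ, 0 ≤ y)
    (hμ0 : μ ≠ Measure.dirac 0) (ν : Measure ℝ) [IsFiniteMeasure ν] (v : ℝ) :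
    Tendsto (fun n => ∫⁻ w, ν (Ioi (v + w)) ∂convPow μ n) atTop (𝓝 0) := by
  have swap (n : ℕ) :
      ∫⁻ w, ν (Ioi (v + w)) ∂convPow μ n = ∫⁻ z, convPow μ n (Iio (z - v)) ∂ν := by
    simp only [Iio, lt_sub_iff_add_lt']
    exact lintegral_measure_setOf_swap (measurableSet_lt (by fun_prop) (by fun_prop))
  simp only [swap]
  have measurable_convPow_Iio (n : ℕ) : Measurable fun z => convPow μ n (Iio (z - v)) :=
    Monotone.measurable fun _ _ h => measure_mono (Iio_subset_Iio (sub_le_sub_right h v))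
  simpa using tendsto_lintegral_of_dominated_convergence 1 measurable_convPow_Iio
    (fun n => ae_of_all _ fun z => prob_le_one) (by simp)
    (ae_of_all _ fun z => tendsto_convPow_Iio hμ hμ0 (z - v))

variable [SFinite μ] {f g : ℝ → ℝ≥0∞}

theorem sum_lintegral_convPow_add (hf : Measurable f) (hg : Measurable g)
    (hfg : ∀ x, f x + ∫⁻ y, g (x + y) ∂μ = g x) (v : ℝ) (n : ℕ) :
    ∑ k ∈ Finset.range n, ∫⁻ w, f (v + w) ∂convPow μ k + ∫⁻ w, g (v + w) ∂convPow μ n = g v := by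
  induction n with
  | zero => simp [convPow]
  | succ n ih =>
    rw [Finset.sum_range_succ, convPow_succ, Measure.lintegral_conv (by fun_prop), add_assoc,
      ← lintegral_add_left (by fun_prop)]
    simpa only [← add_assoc, hfg] using ih

theorem lintegral_potential_eq (hf : Measurable f) (hg : Measurable g)
    (hfg : ∀ x, f x + ∫⁻ y, g (x + y) ∂μ = g x) {v : ℝ}
    (hv : Tendsto (fun n => ∫⁻ w, g (v + w) ∂convPow μ n) atTop (𝓝 0)) :
    ∫⁻ w, f (v + w) ∂potential μ = g v := by
  have partial_sums := (ENNReal.tendsto_nat_tsum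
    fun k => ∫⁻ w, f (v + w) ∂convPow μ k).add hv
  simp only [sum_lintegral_convPow_add hf hg hfg, add_zero] at partial_sums
  rw [potential, lintegral_sum_measure]
  exact tendsto_nhds_unique partial_sums tendsto_const_nhds

end Walk

section ReflDensity

variable {μ : Measure ℝ}

theorem reflDensity_eq_lintegral (x : ℝ) :
    reflDensity μ x = ∫⁻ y, μ (Ioc x (x + y)) ∂μ := by
  refine setLIntegral_eq_of_support_subset fun y hy => ?_
  by_contra hy0
  have hy_neg : y < 0 := not_le.1 hy0
  simp [Ioc_eq_empty (add_lt_of_neg_right x hy_neg).not_gt] at hy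

theorem reflDensity_eq_lintegral_indicator [SFinite μ] (x : ℝ) :
    reflDensity μ x = ∫⁻ y, (Ioi 0).indicator (fun u => μ (Ici u)) (y - x) ∂μ := by
  have hr : MeasurableSet {p : ℝ × ℝ | x < p.2 ∧ p.2 ≤ x + p.1} :=
    .inter (measurableSet_lt measurable_const measurable_snd)
      (measurableSet_le measurable_snd (measurable_fst.const_add x))
  calc
    _ = ∫⁻ z, μ {y | x < z ∧ z ≤ x + y} ∂μ :=
      (reflDensity_eq_lintegral x).trans (lintegral_measure_setOf_swap hr)
    _ = _ := lintegral_congr fun z => by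
      by_cases hz : x < z <;> simp [hz, Ici, add_comm]

theorem measurable_reflDensity [SFinite μ] : Measurable (reflDensity μ) := by
  simp only [funext reflDensity_eq_lintegral_indicator]
  have measurable_indicator : Measurable ((Ioi 0).indicator fun u => μ (Ici u)) :=
    (measurable_measure_Ici μ).indicator measurableSet_Ioi
  fun_prop

theorem reflDensity_add_lintegral_measure_Ioi [IsProbabilityMeasure μ] (hμ : ∀ᵐ y ∂μ, 0 ≤ y)
    (x : ℝ) : reflDensity μ x + ∫⁻ y, μ (Ioi (x + y)) ∂μ = μ (Ioi x) := by
  have split_Ioi : ∀ᵐ y ∂μ, μ (Ioc x (x + y)) + μ (Ioi (x + y)) = μ (Ioi x) := by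
    filter_upwards [hμ] with y hy
    rw [← measure_union (Ioc_disjoint_Ioi le_rfl) measurableSet_Ioi,
      Ioc_union_Ioi_eq_Ioi (le_add_of_nonneg_right hy)]
  have measurable_tail : Measurable fun y => μ (Ioi (x + y)) :=
    (measurable_measure_Ioi μ).comp (measurable_const_add x)
  rw [reflDensity_eq_lintegral, ← lintegral_add_right _ measurable_tail,
    lintegral_congr_ae split_Ioi, lintegral_const, measure_univ, mul_one]

theorem lintegral_reflDensity_potential [IsProbabilityMeasure μ] (hμ : ∀ᵐ y ∂μ, 0 ≤ y)
    (hμ0 : μ ≠ Measure.dirac 0) (v : ℝ) :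
    ∫⁻ w, reflDensity μ (v + w) ∂potential μ = μ (Ioi v) :=
  lintegral_potential_eq measurable_reflDensity (measurable_measure_Ioi μ)
    (reflDensity_add_lintegral_measure_Ioi hμ) (tendsto_lintegral_measure_Ioi_convPow hμ hμ0 μ v)

theorem setLIntegral_Ioi_measure_image_mul_measure_Ioi [SFinite μ] {B : Set ℝ}
    (hB : MeasurableSet B) :
    ∫⁻ v in Ioi 0, μ ((· + v) '' B) * μ (Ioi v) = ∫⁻ b in B, reflDensity μ b := by
  have measure_image (v : ℝ) : μ ((· + v) '' B) = ∫⁻ y, B.indicator 1 (y - v) ∂μ := by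
    rw [image_add_right, ← lintegral_indicator_one (measurable_add_const (-v) hB)]
    rfl
  calc
    _ = ∫⁻ v in Ioi 0, μ ((· + v) '' B) * μ (Ici v) := by
      refine lintegral_congr_ae ?_
      filter_upwards [ae_measure_Ioi_eq_measure_Ici μ (volume.restrict (Ioi 0))] with v hv
      rw [hv]
    _ = ∫⁻ v, (∫⁻ y, B.indicator 1 (y - v) ∂μ) * (Ioi 0).indicator (fun u => μ (Ici u)) v := by
      simp only [← lintegral_indicator measurableSet_Ioi, indicator_mul_right, measure_image]
    _ = ∫⁻ b, B.indicator 1 b * reflDensity μ b := by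
      simp only [reflDensity_eq_lintegral_indicator]
      exact lintegral_lintegral_sub_left_mul_eq (measurable_one.indicator hB)
        ((measurable_measure_Ici μ).indicator measurableSet_Ioi)
    _ = _ := by
      simp only [← indicator_mul_left, lintegral_indicator hB, Pi.one_apply, one_mul]

end ReflDensity

theorem rho_invariant_for_reflections_nonlattice_general
    (μ : Measure ℝ) [IsProbabilityMeasure μ]
    (hpos : μ (Set.Iio 0) = 0) (hnondeg : μ ≠ Measure.dirac 0)
    (B : Set ℝ) (hB : MeasurableSet B) :
    ∫⁻ x in Set.Ioi (0 : ℝ),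
        (∫⁻ w in Set.Ico 0 x, μ ((fun b => b + x - w) '' B) ∂(potential μ)) *
          reflDensity μ x =
      ∫⁻ x in B, reflDensity μ x := by
  have hμ : ∀ᵐ y ∂μ, 0 ≤ y := by
    simpa only [mem_Iio, not_lt] using measure_eq_zero_iff_ae_notMem.1 hpos
  calc
    _ = ∫⁻ v in Ioi 0, μ ((· + v) '' B) * ∫⁻ w in Ici 0, reflDensity μ (v + w) ∂potential μ := by
      simp only [add_sub_assoc]
      exact setLIntegral_Ioi_lintegral_Ico_sub_mul_eq measurable_reflDensity
        (measurable_measure_image_add_right hB)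
    _ = ∫⁻ v in Ioi 0, μ ((· + v) '' B) * μ (Ioi v) := by
      simp only [Measure.restrict_eq_self_of_ae_mem (s := Ici 0) (ae_potential_nonneg hμ),
        lintegral_reflDensity_potential hμ hnondeg]
    _ = ∫⁻ b in B, reflDensity μ b := setLIntegral_Ioi_measure_image_mul_measure_Ioi hB

/-- In the non-lattice case, the measure `ρ(dx) = h(x) dx` with
`h(x) = ∫_{[0,∞)} μ((x,x+y]) μ(dy)` is invariant for the transition kernel
`q(x,B) = ∫_{[0,x)} μ(B + x - w) U(dw)` of the process of reflections: for every Borel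
`B ⊆ [0,∞)`, `∫_{(0,∞)} q(x,B) h(x) dx = ∫_B h(x) dx`. -/
theorem rho_invariant_for_reflections_nonlattice
    (μ : Measure ℝ) [IsProbabilityMeasure μ]
    (hpos : μ (Set.Iio 0) = 0) (hnondeg : μ ≠ Measure.dirac 0)
    (hnonlat : ∀ κ : ℝ, 0 < κ → μ ({x : ℝ | ∃ n : ℕ, x = κ * n})ᶜ ≠ 0)
    (B : Set ℝ) (hB : MeasurableSet B) (hBpos : B ⊆ Set.Ici 0) :
    ∫⁻ x in Set.Ioi (0 : ℝ),
        (∫⁻ w in Set.Ico 0 x, μ ((fun b => b + x - w) '' B) ∂(potential μ)) *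
          reflDensity μ x =
      ∫⁻ x in B, reflDensity μ x :=
  rho_invariant_for_reflections_nonlattice_general μ hpos hnondeg B hB
end

section
/- The total mass ∫_0^∞ h(x) dx of the invariant measure ρ of the process of reflections is finite if and only if ∫_0^∞ (1 − F_μ(x))² dx < ∞. This holds, in particular, when ∫_{[0,∞)} √x μ(dx) < ∞. -/
open MeasureTheory Filter
open scoped ENNReal

/-!
Let `Y` and `Z` be independent with law `μ`. For all real `y` and `z`, the points `x > 0` with
`x < z ≤ x + y` form an interval of length `(min y z)⁺`, so by Tonelli the total mass of `ρ` is
`E[(min Y Z)⁺]`. The layer-cake formula turns the same expectation into `∫_0^∞ P(Y > x, Z > x) dx`,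
the integral of the squared tail. Finally `(min Y Z)⁺ ≤ √Y √Z`, so the expectation is at most
`(E √Y)²`.
-/

lemma volume_restrict_Ioi_zero_setOf_mem_Ioc_add (y z : ℝ) :
    volume.restrict (Set.Ioi 0) {x : ℝ | z ∈ Set.Ioc x (x + y)} = ENNReal.ofReal (min y z) := by
  have hinter : {x : ℝ | z ∈ Set.Ioc x (x + y)} ∩ Set.Ici 0 = Set.Ico (max (z - y) 0) z := by
    ext x
    simp only [Set.mem_inter_iff, Set.mem_ofPred_eq, Set.mem_Ioc, Set.mem_Ici, Set.mem_Ico,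
      sup_le_iff, sub_le_iff_le_add]
    tauto
  rw [Measure.restrict_congr_set Ioi_ae_eq_Ici, Measure.restrict_apply' measurableSet_Ici, hinter,
    Real.volume_Ico, ← min_sub_sub_left, sub_sub_cancel, sub_zero]

lemma measurableSet_setOf_mem_Ioc_add :
    MeasurableSet {q : ℝ × ℝ × ℝ | q.2.2 ∈ Set.Ioc q.1 (q.1 + q.2.1)} := by
  simp only [Set.mem_Ioc]
  measurability

lemma setLIntegral_measure_setOf_mem_Ioc_add (π : Measure (ℝ × ℝ)) [SFinite π] :
    ∫⁻ x in Set.Ioi (0 : ℝ), π {p | p.2 ∈ Set.Ioc x (x + p.1)} =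
      ∫⁻ p, ENNReal.ofReal (min p.1 p.2) ∂π :=
  calc
    _ = (volume.restrict (Set.Ioi 0)).prod π {q | q.2.2 ∈ Set.Ioc q.1 (q.1 + q.2.1)} :=
      (Measure.prod_apply measurableSet_setOf_mem_Ioc_add).symm
    _ = ∫⁻ p, volume.restrict (Set.Ioi 0) {x : ℝ | p.2 ∈ Set.Ioc x (x + p.1)} ∂π :=
      Measure.prod_apply_symm measurableSet_setOf_mem_Ioc_add
    _ = ∫⁻ p, ENNReal.ofReal (min p.1 p.2) ∂π :=
      lintegral_congr fun p ↦ volume_restrict_Ioi_zero_setOf_mem_Ioc_add p.1 p.2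

lemma reflDensity_eq_prod_apply (μ : Measure ℝ) [SFinite μ] (x : ℝ) :
    reflDensity μ x = μ.prod μ {p | p.2 ∈ Set.Ioc x (x + p.1)} := by
  have hsupp : (fun y ↦ μ (Set.Ioc x (x + y))).support ⊆ Set.Ici 0 := by
    intro y hy
    by_contra hneg
    have : x + y ≤ x := by linarith [Set.notMem_Ici.mp hneg]
    exact hy (by simp only [Set.Ioc_eq_empty_of_le this, measure_empty])
  rw [reflDensity, setLIntegral_eq_of_support_subset hsupp]
  exact (Measure.prod_apply
    (measurableSet_setOf_mem_Ioc_add.preimage measurable_prodMk_left)).symm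

lemma setLIntegral_reflDensity (μ : Measure ℝ) [SFinite μ] :
    ∫⁻ x in Set.Ioi (0 : ℝ), reflDensity μ x =
      ∫⁻ p, ENNReal.ofReal (min p.1 p.2) ∂μ.prod μ := by
  simp_rw [reflDensity_eq_prod_apply]
  exact setLIntegral_measure_setOf_mem_Ioc_add _

lemma lintegral_ofReal_eq_setLIntegral_measure_lt {α : Type*} [MeasurableSpace α] {μ : Measure α}
    {f : α → ℝ} (hf : AEMeasurable f μ) :
    ∫⁻ a, ENNReal.ofReal (f a) ∂μ = ∫⁻ t in Set.Ioi (0 : ℝ), μ {a | t < f a} :=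
  calc
    _ = ∫⁻ a, ENNReal.ofReal (max (f a) 0) ∂μ := by
      simp only [ENNReal.ofReal_max, ENNReal.ofReal_zero, zero_le, sup_of_le_left]
    _ = ∫⁻ t in Set.Ioi (0 : ℝ), μ {a | t < max (f a) 0} :=
      lintegral_eq_lintegral_meas_lt μ (.of_forall fun a ↦ le_max_right _ _) (by fun_prop)
    _ = ∫⁻ t in Set.Ioi (0 : ℝ), μ {a | t < f a} := by
      refine setLIntegral_congr_fun measurableSet_Ioi fun t ht ↦ ?_
      simp only [lt_sup_iff, (Set.mem_Ioi.mp ht).not_gt, or_false]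

lemma setLIntegral_measure_Ioi_mul_measure_Ioi (μ ν : Measure ℝ) [SFinite ν] :
    ∫⁻ x in Set.Ioi (0 : ℝ), μ (Set.Ioi x) * ν (Set.Ioi x) =
      ∫⁻ p, ENNReal.ofReal (min p.1 p.2) ∂μ.prod ν := by
  have hmin (x : ℝ) : {p : ℝ × ℝ | x < min p.1 p.2} = Set.Ioi x ×ˢ Set.Ioi x := by
    ext p
    simp only [Set.mem_ofPred_eq, Set.mem_prod, Set.mem_Ioi, lt_min_iff]
  rw [lintegral_ofReal_eq_setLIntegral_measure_lt (by fun_prop)]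
  simp_rw [hmin, Measure.prod_prod]

lemma min_le_sqrt_mul_sqrt_s11 (y z : ℝ) : min y z ≤ √y * √z := by
  rcases le_total (min y z) 0 with hmin | hmin
  · exact hmin.trans (by positivity)
  · calc
      min y z = √(min y z) * √(min y z) := (Real.mul_self_sqrt hmin).symm
      _ ≤ √y * √z := by
        gcongr
        exacts [min_le_left y z, min_le_right y z]

lemma lintegral_ofReal_min_le_mul_lintegral_sqrt (μ ν : Measure ℝ) [SFinite ν] :
    ∫⁻ p, ENNReal.ofReal (min p.1 p.2) ∂μ.prod ν ≤
      (∫⁻ y, ENNReal.ofReal √y ∂μ) * ∫⁻ z, ENNReal.ofReal √z ∂ν :=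
  calc
    _ ≤ ∫⁻ p : ℝ × ℝ, ENNReal.ofReal √p.1 * ENNReal.ofReal √p.2 ∂μ.prod ν :=
      lintegral_mono fun p ↦ (ENNReal.ofReal_le_ofReal (min_le_sqrt_mul_sqrt_s11 p.1 p.2)).trans_eq
        (ENNReal.ofReal_mul (Real.sqrt_nonneg p.1))
    _ = (∫⁻ y, ENNReal.ofReal √y ∂μ) * ∫⁻ z, ENNReal.ofReal √z ∂ν :=
      lintegral_prod_mul (f := fun y ↦ ENNReal.ofReal √y) (g := fun z ↦ ENNReal.ofReal √z)
        (by fun_prop) (by fun_prop)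

lemma setLIntegral_Ici_zero_ofReal_sqrt (μ : Measure ℝ) :
    ∫⁻ x in Set.Ici (0 : ℝ), ENNReal.ofReal √x ∂μ = ∫⁻ x, ENNReal.ofReal √x ∂μ := by
  refine setLIntegral_eq_of_support_subset fun x hx ↦ ?_
  by_contra hneg
  exact hx (by simp only [Real.sqrt_eq_zero_of_nonpos (Set.notMem_Ici.mp hneg).le,
    ENNReal.ofReal_zero])

theorem rho_finite_mass_iff_quadratic_tail_nonlattice_general (μ : Measure ℝ) [SFinite μ] :
    ∫⁻ x in Set.Ioi (0 : ℝ), reflDensity μ x = ∫⁻ x in Set.Ioi (0 : ℝ), μ (Set.Ioi x) ^ 2 ∧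
      ∫⁻ x in Set.Ioi (0 : ℝ), reflDensity μ x ≤
        (∫⁻ x in Set.Ici (0 : ℝ), ENNReal.ofReal √x ∂μ) ^ 2 := by
  simp_rw [setLIntegral_reflDensity, sq, setLIntegral_Ici_zero_ofReal_sqrt]
  exact ⟨(setLIntegral_measure_Ioi_mul_measure_Ioi μ μ).symm,
    lintegral_ofReal_min_le_mul_lintegral_sqrt μ μ⟩

/-- The total mass `∫_0^∞ h(x) dx` of the invariant measure
`ρ(dx) = h(x) dx` of the process of reflections is finite if and only if
`∫_0^∞ (1 - F_μ(x))² dx < ∞` (where `1 - F_μ(x) = μ((x,∞))`); in particular it is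
finite when `∫ √x μ(dx) < ∞`. -/
theorem rho_finite_mass_iff_quadratic_tail_nonlattice
    (μ : Measure ℝ) [IsProbabilityMeasure μ]
    (hpos : μ (Set.Iio 0) = 0) (hnondeg : μ ≠ Measure.dirac 0) :
    ((∫⁻ x in Set.Ioi (0 : ℝ), reflDensity μ x) < ⊤ ↔
        (∫⁻ x in Set.Ioi (0 : ℝ), (μ (Set.Ioi x)) ^ 2) < ⊤) ∧
      ((∫⁻ x in Set.Ici (0 : ℝ), ENNReal.ofReal (Real.sqrt x) ∂μ) < ⊤ →
        (∫⁻ x in Set.Ioi (0 : ℝ), reflDensity μ x) < ⊤) := by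
  obtain ⟨heq, hle⟩ := rho_finite_mass_iff_quadratic_tail_nonlattice_general μ
  exact ⟨by rw [heq], fun hsqrt ↦ hle.trans_lt (ENNReal.pow_lt_top hsqrt)⟩
end
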